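/- Let C > 0, let λ be a partition of n whose number of rows and number of columns are both at most C·√n, and let π ∈ S_n. Then |χ^λ(π)| ≤ ( max[ (16·e³·C)³ , (32·e²·C)²·|π|²/n ] / √n )^{|π|}. -/

import Mathlib

open scoped BigOperators

/-- `|π|`: the minimal number of transpositions whose product is `π`; equivalently
`n` minus the number of orbits of `π`. -/
def permLength {n : ℕ} (π : Equiv.Perm (Fin n)) : ℕ :=
  π.cycleType.sum - π.cycleType.card

/-- The full cycle type of `π ∈ S_n`: the cycle type together with `1`s for fixed points. -/
def fullCycleType {n : ℕ} (π : Equiv.Perm (Fin n)) : Multiset ℕ :=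
  π.cycleType + Multiset.replicate (n - π.cycleType.sum) 1

/-- For a partition `λ` of `n` (given as an antitone `lam : Fin n → ℕ`) and a multiset
`k` of positive integers, the irreducible character value `Tr ρ^λ(k)`, defined via
Frobenius' character formula. -/
noncomputable def frobChar (n : ℕ) (lam : Fin n → ℕ) (k : Multiset ℕ) : ℤ :=
  MvPolynomial.coeff
    (Finsupp.equivFunOnFinite.symm fun i : Fin n => lam i + (n - 1 - (i : ℕ)))
    ((Multiset.map (fun m => ∑ i : Fin n, MvPolynomial.X i ^ m) k).prod *
      ∑ w : Equiv.Perm (Fin n),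
        MvPolynomial.C ((Equiv.Perm.sign w : ℤ)) *
          ∏ i : Fin n, MvPolynomial.X i ^ (n - 1 - ((w i : ℕ))))

/-- The normalized character `χ^λ(π) = Tr ρ^λ(π) / Tr ρ^λ(e)`. -/
noncomputable def normChar (n : ℕ) (lam : Fin n → ℕ) (π : Equiv.Perm (Fin n)) : ℝ :=
  (frobChar n lam (fullCycleType π) : ℝ) / (frobChar n lam (Multiset.replicate n 1) : ℝ)


open Equiv

namespace CB

/-- monotone functions are determined by image and jump set -/
lemma mono_inj {k R : ℕ} (g g' : Fin (k+1) → Fin R) (hg : Monotone g) (hg' : Monotone g')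
    (him : Finset.univ.image g = Finset.univ.image g')
    (hD : ∀ i : Fin k, g i.castSucc = g i.succ ↔ g' i.castSucc = g' i.succ) : g = g' := by
  have key : ∀ (g g' : Fin (k+1) → Fin R), Monotone g → Monotone g' →
      Finset.univ.image g = Finset.univ.image g' → ∀ i : Fin k, g i.castSucc = g' i.castSucc →
      g' i.castSucc ≠ g' i.succ → g i.succ ≤ g' i.succ := by
    intro g g' hg hg' him i h1 h2
    have h3 : g' i.succ ∈ Finset.univ.image g := by rw [him]; simp
    obtain ⟨j, -, hj⟩ := Finset.mem_image.1 h3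
    rw [← hj]
    apply hg
    by_contra hlt
    have hle : j ≤ i.castSucc := by
      rw [Fin.le_def]; rw [not_le, Fin.lt_def] at hlt; simp at hlt ⊢; omega
    have h4 := hg hle
    rw [hj, h1] at h4
    have h5 : g' i.castSucc ≤ g' i.succ := hg' (Fin.castSucc_lt_succ).le
    exact h2 (le_antisymm h5 h4)
  have key0 : ∀ (g g' : Fin (k+1) → Fin R), Monotone g → Monotone g' →
      Finset.univ.image g = Finset.univ.image g' → g 0 ≤ g' 0 := by
    intro g g' hg hg' him
    have h3 : g' 0 ∈ Finset.univ.image g := by rw [him]; simp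
    obtain ⟨j, -, hj⟩ := Finset.mem_image.1 h3
    rw [← hj]; exact hg (Fin.zero_le j)
  funext i
  induction i using Fin.induction with
  | zero => exact le_antisymm (key0 g g' hg hg' him) (key0 g' g hg' hg him.symm)
  | succ i ih =>
    by_cases h : g i.castSucc = g i.succ
    · rw [← h, ← (hD i).1 h, ih]
    · have h' : ¬ g' i.castSucc = g' i.succ := fun h2 => h ((hD i).2 h2)
      exact le_antisymm (key g g' hg hg' him i ih h') (key g' g hg' hg him.symm i ih.symm h)

open Classical in
lemma mono_card (k R p : ℕ) :
    (Finset.univ.filter fun g : Fin (k+1) → Fin R =>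
      Monotone g ∧ (Finset.univ.image g).card = p).card ≤ R.choose p * 2 ^ k := by
  have : (Finset.powersetCard p (Finset.univ : Finset (Fin R)) ×ˢ
      (Finset.univ : Finset (Finset (Fin k)))).card = R.choose p * 2 ^ k := by
    simp [Finset.card_product]
  rw [← this]
  apply Finset.card_le_card_of_injOn
    (fun g => (Finset.univ.image g, Finset.univ.filter fun i : Fin k => g i.castSucc = g i.succ))
  · intro g hg
    simp at hg
    simp [Finset.mem_powersetCard, hg.2]
  · intro g hg g' hg' h
    simp at hg hg'
    simp only [Prod.mk.injEq] at h
    refine mono_inj g g' hg.1 hg'.1 h.1 ?_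
    intro i
    have := Finset.ext_iff.1 h.2 i
    simpa using this

/-- Rank in the stable sorting by `f`. -/
def rk {K R : ℕ} (f : Fin K → Fin R) (t : Fin K) : Fin K := (Tuple.sort f)⁻¹ t

lemma rk_eq {K R : ℕ} (f : Fin K → Fin R) (t : Fin K) :
    ((rk f t : Fin K) : ℕ) = (Finset.univ.filter fun x => (f ∘ Tuple.sort f) x < f t).card +
      (Finset.univ.filter fun i => i < t ∧ f i = f t).card := by
  set s := Tuple.sort f with hs
  have hmono : Monotone (f ∘ s) := Tuple.monotone_sort f
  have htie : ∀ i j, i < j → f (s i) = f (s j) → s i < s j := (Tuple.eq_sort_iff.1 hs).2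
  set x := rk f t with hx
  have hsx : s x = t := by simp [hx, rk, hs]
  have h1 : (Finset.univ.filter fun y : Fin K => y < x).card = (x : ℕ) := by
    rw [show (Finset.univ.filter fun y : Fin K => y < x) = Finset.Iio x by ext; simp]
    exact Fin.card_Iio x
  rw [← h1]
  have h2 : (Finset.univ.filter fun y : Fin K => y < x) =
      (Finset.univ.filter fun y => (f ∘ s) y < f t) ∪
      (Finset.univ.filter fun y => s y < t ∧ f (s y) = f t) := by
    ext y
    simp only [Finset.mem_filter, Finset.mem_univ, true_and, Finset.mem_union, Function.comp]
    constructor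
    · intro hy
      have h3 : f (s y) ≤ f (s x) := hmono hy.le
      rw [hsx] at h3
      rcases h3.lt_or_eq with h | h
      · exact Or.inl h
      · right
        refine ⟨?_, h⟩
        have := htie y x hy (by rw [hsx, h])
        rwa [hsx] at this
    · intro hy
      by_contra hlt
      rw [not_lt] at hlt
      have h3 : f (s x) ≤ f (s y) := hmono hlt
      rw [hsx] at h3
      rcases hy with hy | ⟨hy, hy2⟩
      · exact absurd h3 (not_le.2 hy)
      · rcases hlt.lt_or_eq with h | h
        · have := htie x y h (by rw [hsx, hy2])
          rw [hsx] at this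
          exact absurd this (not_lt.2 hy.le)
        · rw [← h, hsx] at hy
          exact absurd hy (lt_irrefl _)
  rw [h2, Finset.card_union_of_disjoint]
  · congr 1
    apply Finset.card_bij (fun y _ => s y)
    · intro y hy; simpa using hy
    · intro a _ b _ h; exact s.injective h
    · intro b hb
      exact ⟨s⁻¹ b, by simpa using hb, by simp⟩
  · rw [Finset.disjoint_filter]
    rintro y - h3 ⟨-, h4⟩
    simp only [Function.comp] at h3
    rw [h4] at h3
    exact lt_irrefl _ h3

/-- Triples counted by `T`. -/
def Good {α : Type*} {R L : ℕ} (π : Perm α) (x : Perm α × (α → Fin R) × (α → Fin L)) : Prop :=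
  (∀ i, x.2.1 (x.1 i) = x.2.1 i) ∧ ∀ i, x.2.2 (x.1⁻¹ (π i)) = x.2.2 i

lemma enc_inj {k R L : ℕ} (x x' : Perm (Fin (k+1)) × (Fin (k+1) → Fin R) × (Fin (k+1) → Fin L))
    (h : Good (finRotate (k+1)) x) (h' : Good (finRotate (k+1)) x')
    (e1 : x.2.1 ∘ Tuple.sort x.2.1 = x'.2.1 ∘ Tuple.sort x'.2.1)
    (e2 : x.2.2 ∘ Tuple.sort x.2.2 = x'.2.2 ∘ Tuple.sort x'.2.2)
    (e3 : (Tuple.sort x.2.2)⁻¹ * (finRotate (k+1))⁻¹ * x.1 * Tuple.sort x.2.1 =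
      (Tuple.sort x'.2.2)⁻¹ * (finRotate (k+1))⁻¹ * x'.1 * Tuple.sort x'.2.1)
    (e4 : (Tuple.sort x.2.1)⁻¹ 0 = (Tuple.sort x'.2.1)⁻¹ 0) : x = x' := by
  obtain ⟨σ, f, g⟩ := x
  obtain ⟨σ', f', g'⟩ := x'
  obtain ⟨hf, hg⟩ := h
  obtain ⟨hf', hg'⟩ := h'
  dsimp only at *
  set ζ := finRotate (k+1) with hζ
  have grank : ∀ {R : ℕ} (f f' : Fin (k+1) → Fin R), f ∘ Tuple.sort f = f' ∘ Tuple.sort f' →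
      ∀ t, (∀ s ≤ t, f s = f' s) → rk f t = rk f' t := by
    intro R f f' e t ht
    apply Fin.ext
    rw [rk_eq, rk_eq, e, ht t le_rfl]
    congr 2
    ext i
    simp only [Finset.mem_filter, Finset.mem_univ, true_and]
    constructor
    · rintro ⟨a, b⟩; exact ⟨a, by rw [← ht i a.le, b]⟩
    · rintro ⟨a, b⟩; exact ⟨a, by rw [ht i a.le, b]⟩
  have hg2 : ∀ i, g (ζ⁻¹ (σ i)) = g i := by
    intro i
    have := hg (ζ⁻¹ (σ i))
    simpa using this.symm
  have hg2' : ∀ i, g' (ζ⁻¹ (σ' i)) = g' i := by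
    intro i
    have := hg' (ζ⁻¹ (σ' i))
    simpa using this.symm
  have hf2 : ∀ i, f (σ⁻¹ (ζ i)) = f (ζ i) := by
    intro i
    have := hf (σ⁻¹ (ζ i))
    simpa using this.symm
  have hf2' : ∀ i, f' (σ'⁻¹ (ζ i)) = f' (ζ i) := by
    intro i
    have := hf' (σ'⁻¹ (ζ i))
    simpa using this.symm
  -- determination of g t
  have detg : ∀ (g : Fin (k+1) → Fin L) (σ : Perm (Fin (k+1))) (f : Fin (k+1) → Fin R),
      (∀ i, g (ζ⁻¹ (σ i)) = g i) → ∀ t, g t = (g ∘ Tuple.sort g)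
        (((Tuple.sort g)⁻¹ * ζ⁻¹ * σ * Tuple.sort f) (rk f t)) := by
    intro g σ f hg t
    simpa [rk] using (hg t).symm
  have detf : ∀ (g : Fin (k+1) → Fin L) (σ : Perm (Fin (k+1))) (f : Fin (k+1) → Fin R),
      (∀ i, f (σ⁻¹ (ζ i)) = f (ζ i)) → ∀ t, f (ζ t) = (f ∘ Tuple.sort f)
        (((Tuple.sort g)⁻¹ * ζ⁻¹ * σ * Tuple.sort f)⁻¹ (rk g t)) := by
    intro g σ f hf t
    simpa [rk, mul_inv_rev] using (hf t).symm
  have main : ∀ t : Fin (k+1), (∀ s ≤ t, f s = f' s) ∧ (∀ s ≤ t, g s = g' s) := by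
    have stepg : ∀ t : Fin (k+1), (∀ s ≤ t, f s = f' s) → g t = g' t := by
      intro t ht
      rw [detg g σ f hg2 t, detg g' σ' f' hg2' t, e2, e3, grank f f' e1 t ht]
    intro t
    induction t using Fin.induction with
    | zero =>
      have h0 : f 0 = f' 0 := by
        have a1 : f 0 = (f ∘ Tuple.sort f) ((Tuple.sort f)⁻¹ 0) := by simp
        have a2 : f' 0 = (f' ∘ Tuple.sort f') ((Tuple.sort f')⁻¹ 0) := by simp
        rw [a1, a2, e1, e4]
      have h1 : ∀ s ≤ (0 : Fin (k+1)), f s = f' s := by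
        intro s hs
        have : s = 0 := le_antisymm hs (Fin.zero_le s)
        rw [this, h0]
      refine ⟨h1, ?_⟩
      intro s hs
      have : s = 0 := le_antisymm hs (Fin.zero_le s)
      rw [this]; exact stepg 0 h1
    | succ i ih =>
      have hz : ζ i.castSucc = i.succ := by
        rw [hζ, finRotate_apply, Fin.coeSucc_eq_succ]
      have hfi : f i.succ = f' i.succ := by
        rw [← hz, detf g σ f hf2, detf g' σ' f' hf2', e1, e3, grank g g' e2 _ ih.2]
      have ext1 : ∀ s ≤ i.succ, s ≤ i.castSucc ∨ s = i.succ := by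
        intro s hs
        rw [Fin.le_def] at *
        rw [Fin.ext_iff]
        simp at *
        omega
      have h1 : ∀ s ≤ i.succ, f s = f' s := by
        intro s hs
        rcases ext1 s hs with h | h
        · exact ih.1 s h
        · rw [h, hfi]
      refine ⟨h1, ?_⟩
      intro s hs
      rcases ext1 s hs with h | h
      · exact ih.2 s h
      · rw [h]; exact stepg _ h1
  have ff : f = f' := funext fun t => (main t).1 t le_rfl
  have gg : g = g' := funext fun t => (main t).2 t le_rfl
  subst ff
  subst gg
  have : σ = σ' := by
    simpa using e3
  rw [this]

end CB

open Equiv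
namespace CB

lemma image_card_add_le {α β γ : Type*} [Fintype α] [DecidableEq β] [DecidableEq γ]
    (f : α → β) (h : α → γ)
    (H : ∀ (u : α → ℚ) (a : β → ℚ) (b : γ → ℚ), (∀ x, u x = a (f x)) → (∀ x, u x = b (h x)) →
      ∃ c, ∀ x, u x = c) :
    (Finset.univ.image f).card + (Finset.univ.image h).card ≤ Fintype.card α + 1 := by
  have gen : ∀ {β : Type _} [DecidableEq β] (f : α → β), ∃ U : Submodule ℚ (α → ℚ),
      Module.finrank ℚ U = (Finset.univ.image f).card ∧ ∀ u ∈ U, ∃ a : β → ℚ, ∀ x, u x = a (f x) := by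
    intro β _ f
    let f' : α → {b // b ∈ Finset.univ.image f} := fun x => ⟨f x, by simp⟩
    have hf' : Function.Surjective f' := by
      rintro ⟨b, hb⟩
      obtain ⟨x, -, hx⟩ := Finset.mem_image.1 hb
      exact ⟨x, Subtype.ext hx⟩
    refine ⟨LinearMap.range (LinearMap.funLeft ℚ ℚ f'), ?_, ?_⟩
    · rw [LinearMap.finrank_range_of_inj (LinearMap.funLeft_injective_of_surjective _ _ _ hf')]
      simp
    · rintro u ⟨v, rfl⟩
      refine ⟨fun b => if hb : b ∈ Finset.univ.image f then v ⟨b, hb⟩ else 0, fun x => ?_⟩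
      simp [LinearMap.funLeft_apply, f']
  have gen2 : ∀ {β : Type _} [DecidableEq β] (f : α → β), ∃ U : Submodule ℚ (α → ℚ),
      Module.finrank ℚ U = (Finset.univ.image f).card ∧ ∀ u ∈ U, ∃ a : β → ℚ, ∀ x, u x = a (f x) := by
    intro β _ f
    let f' : α → {b // b ∈ Finset.univ.image f} := fun x => ⟨f x, by simp⟩
    have hf' : Function.Surjective f' := by
      rintro ⟨b, hb⟩
      obtain ⟨x, -, hx⟩ := Finset.mem_image.1 hb
      exact ⟨x, Subtype.ext hx⟩
    refine ⟨LinearMap.range (LinearMap.funLeft ℚ ℚ f'), ?_, ?_⟩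
    · rw [LinearMap.finrank_range_of_inj (LinearMap.funLeft_injective_of_surjective _ _ _ hf')]
      simp
    · rintro u ⟨v, rfl⟩
      refine ⟨fun b => if hb : b ∈ Finset.univ.image f then v ⟨b, hb⟩ else 0, fun x => ?_⟩
      simp [LinearMap.funLeft_apply, f']
  obtain ⟨U, hU, hU2⟩ := gen f
  obtain ⟨W, hW, hW2⟩ := gen2 h
  have h1 := Submodule.finrank_sup_add_finrank_inf_eq U W
  have h2 : Module.finrank ℚ (U ⊔ W : Submodule ℚ (α → ℚ)) ≤ Fintype.card α := by
    have := Submodule.finrank_le (U ⊔ W)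
    simpa using this
  have h3 : Module.finrank ℚ (U ⊓ W : Submodule ℚ (α → ℚ)) ≤ 1 := by
    have hle : U ⊓ W ≤ Submodule.span ℚ {(fun _ => 1 : α → ℚ)} := by
      rintro u ⟨hu1, hu2⟩
      obtain ⟨a, ha⟩ := hU2 u hu1
      obtain ⟨b, hb⟩ := hW2 u hu2
      obtain ⟨c, hc⟩ := H u a b ha hb
      rw [Submodule.mem_span_singleton]
      exact ⟨c, by funext x; simp [hc]⟩
    refine (Submodule.finrank_mono hle).trans ?_
    refine (finrank_span_le_card _).trans ?_
    simp
  omega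

lemma finRotate_inv_const {k : ℕ} {β : Type*} (u : Fin (k+1) → β)
    (h : ∀ i, u (finRotate (k+1) i) = u i) : ∀ x, u x = u 0 := by
  intro x
  induction x using Fin.induction with
  | zero => rfl
  | succ i ih =>
    have hz : finRotate (k+1) i.castSucc = i.succ := by
      rw [finRotate_apply, Fin.coeSucc_eq_succ]
    rw [← hz, h, ih]

lemma good_pq {k R L : ℕ} (x : Perm (Fin (k+1)) × (Fin (k+1) → Fin R) × (Fin (k+1) → Fin L))
    (h : Good (finRotate (k+1)) x) :
    (Finset.univ.image x.2.1).card + (Finset.univ.image x.2.2).card ≤ k + 2 := by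
  have := image_card_add_le x.2.1 x.2.2 (by
    intro u a b ha hb
    refine ⟨u 0, finRotate_inv_const u ?_⟩
    intro i
    have h1 : u (x.1 (x.1⁻¹ (finRotate (k+1) i))) = u (x.1⁻¹ (finRotate (k+1) i)) := by
      rw [ha, ha (x.1⁻¹ _), h.1]
    rw [hb (x.1⁻¹ _), h.2, ← hb] at h1
    simpa using h1)
  simpa using this

open Classical in
lemma card_rot (k R L : ℕ) :
    Nat.card {x : Perm (Fin (k+1)) × (Fin (k+1) → Fin R) × (Fin (k+1) → Fin L) //
      Good (finRotate (k+1)) x} ≤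
    ∑ pq ∈ (Finset.Icc 1 (k+1) ×ˢ Finset.Icc 1 (k+1)).filter (fun pq => pq.1 + pq.2 ≤ k + 2),
      (R.choose pq.1 * 2 ^ k) * ((L.choose pq.2 * 2 ^ k) * ((k+1).factorial * (k+1))) := by
  let Mo : ∀ (R p : ℕ), Finset (Fin (k+1) → Fin R) := fun R p =>
    (Finset.univ.filter fun g : Fin (k+1) → Fin R =>
      Monotone g ∧ (Finset.univ.image g).card = p)
  let E : Finset ((Fin (k+1) → Fin R) × (Fin (k+1) → Fin L) × Perm (Fin (k+1)) × Fin (k+1)) :=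
    ((Finset.Icc 1 (k+1) ×ˢ Finset.Icc 1 (k+1)).filter (fun pq => pq.1 + pq.2 ≤ k + 2)).biUnion
      fun pq => Mo R pq.1 ×ˢ Mo L pq.2 ×ˢ Finset.univ ×ˢ Finset.univ
  have hE : E.card ≤ ∑ pq ∈ (Finset.Icc 1 (k+1) ×ˢ Finset.Icc 1 (k+1)).filter
      (fun pq => pq.1 + pq.2 ≤ k + 2),
      (R.choose pq.1 * 2 ^ k) * ((L.choose pq.2 * 2 ^ k) * ((k+1).factorial * (k+1))) := by
    refine Finset.card_biUnion_le.trans (Finset.sum_le_sum ?_)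
    intro pq _
    rw [Finset.card_product, Finset.card_product, Finset.card_product]
    refine Nat.mul_le_mul (mono_card k R pq.1) (Nat.mul_le_mul (mono_card k L pq.2) ?_)
    simp [Fintype.card_perm]
  refine le_trans ?_ hE
  rw [Nat.card_eq_fintype_card, Fintype.card_subtype]
  apply Finset.card_le_card_of_injOn (fun x =>
    (x.2.1 ∘ Tuple.sort x.2.1, x.2.2 ∘ Tuple.sort x.2.2,
     (Tuple.sort x.2.2)⁻¹ * (finRotate (k+1))⁻¹ * x.1 * Tuple.sort x.2.1, (Tuple.sort x.2.1)⁻¹ 0))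
  · intro x hx
    have hx : Good (finRotate (k+1)) x := by simpa using hx
    have him : ∀ {R : ℕ} (f : Fin (k+1) → Fin R),
        Finset.univ.image (f ∘ Tuple.sort f) = Finset.univ.image f := by
      intro R f
      ext b
      simp only [Finset.mem_image, Finset.mem_univ, true_and, Function.comp]
      constructor
      · rintro ⟨a, ha⟩; exact ⟨_, ha⟩
      · rintro ⟨a, ha⟩; exact ⟨(Tuple.sort f)⁻¹ a, by simpa using ha⟩
    have hpos : ∀ {R : ℕ} (f : Fin (k+1) → Fin R), 1 ≤ (Finset.univ.image f).card := by
      intro R f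
      exact Finset.card_pos.2 ⟨f 0, by simp⟩
    have hle : ∀ {R : ℕ} (f : Fin (k+1) → Fin R), (Finset.univ.image f).card ≤ k + 1 := by
      intro R f
      exact Finset.card_image_le.trans (by simp)
    have := good_pq x hx
    simp only [E, Finset.coe_biUnion, Set.mem_iUnion, Finset.mem_coe]
    refine ⟨((Finset.univ.image x.2.1).card, (Finset.univ.image x.2.2).card), ?_, ?_⟩
    · simp only [Finset.mem_filter, Finset.mem_product, Finset.mem_Icc]
      exact ⟨⟨⟨hpos _, hle _⟩, ⟨hpos _, hle _⟩⟩, this⟩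
    · simp only [Finset.mem_product, Finset.mem_univ, and_true, Mo, Finset.mem_filter, true_and, him]
      exact ⟨Tuple.monotone_sort _, Tuple.monotone_sort _⟩
  · intro x hx x' hx' e
    simp only [Finset.coe_filter, Finset.mem_univ, true_and, Set.mem_ofPred_eq] at hx hx'
    simp only [Prod.mk.injEq] at e
    exact enc_inj x x' hx hx' e.1 e.2.1 e.2.2.1 e.2.2.2

lemma num_term (k p q : ℕ) (N : ℝ) (hN : 1 ≤ N) (R L : ℕ) (hR : (R : ℝ) ≤ N) (hL : (L : ℝ) ≤ N)
    (hp : 1 ≤ p) (hq : 1 ≤ q) (hpq : p + q ≤ k + 2) :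
    (R.choose p : ℝ) * (L.choose q) * (k+1).factorial ≤
      N ^ (k+2) * (8 * 4 ^ k) * (max 1 ((k+1 : ℕ) / N)) ^ (k+1) := by
  obtain ⟨m, hm⟩ := Nat.exists_eq_add_of_le hpq
  set Y : ℝ := max 1 ((k+1 : ℕ) / N) with hY
  have hY1 : 1 ≤ Y := le_max_left _ _
  have hN0 : 0 < N := by linarith
  have h1 : (R.choose p : ℝ) ≤ N ^ p / p.factorial :=
    (Nat.choose_le_pow_div p R).trans (by gcongr)
  have h2 : (L.choose q : ℝ) ≤ N ^ q / q.factorial :=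
    (Nat.choose_le_pow_div q L).trans (by gcongr)
  -- factorial
  have h3 : (k+1).factorial ≤ p.factorial * q.factorial * m.factorial * (8 * 4 ^ k) := by
    have e1 : (k+2).factorial = (k+2).choose p * p.factorial * (q+m).factorial := by
      have := Nat.choose_mul_factorial_mul_factorial (show p ≤ k + 2 by omega)
      rw [← this]; congr 2; omega
    have e2 : (q+m).factorial = (q+m).choose q * q.factorial * m.factorial := by
      have := Nat.choose_mul_factorial_mul_factorial (show q ≤ q + m by omega)
      rw [← this]; congr 2; omega
    have b1 : (k+2).choose p ≤ 2 ^ (k+2) := Nat.choose_le_two_pow _ _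
    have b2 : (q+m).choose q ≤ 2 ^ (k+1) :=
      (Nat.choose_le_two_pow _ _).trans (Nat.pow_le_pow_right (by norm_num) (by omega))
    calc (k+1).factorial ≤ (k+2).factorial := Nat.factorial_le (by omega)
      _ = ((k+2).choose p * (q+m).choose q) * (p.factorial * q.factorial * m.factorial) := by
        rw [e1, e2]; ring
      _ ≤ (2 ^ (k+2) * 2 ^ (k+1)) * (p.factorial * q.factorial * m.factorial) :=
        Nat.mul_le_mul_right _ (Nat.mul_le_mul b1 b2)
      _ = _ := by
        rw [show (4:ℕ) = 2 ^ 2 by norm_num, ← pow_mul]; ring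
  have h3' : ((k+1).factorial : ℝ) ≤ p.factorial * q.factorial * m.factorial * (8 * 4 ^ k) := by
    exact_mod_cast h3
  have h4 : (m.factorial : ℝ) ≤ N ^ m * Y ^ (k+1) := by
    have a1 : (m.factorial : ℝ) ≤ ((k+1 : ℕ) : ℝ) ^ m := by
      have : m.factorial ≤ (k+1) ^ m :=
        (Nat.factorial_le_pow m).trans (Nat.pow_le_pow_left (by omega) m)
      exact_mod_cast this
    have a2 : ((k+1 : ℕ) : ℝ) ≤ N * Y := by
      have : ((k+1 : ℕ) : ℝ) / N ≤ Y := le_max_right _ _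
      rw [div_le_iff₀ hN0] at this
      linarith
    calc (m.factorial : ℝ) ≤ (N * Y) ^ m := a1.trans (by gcongr)
      _ = N ^ m * Y ^ m := mul_pow _ _ _
      _ ≤ _ := by
        gcongr
        omega
  have pp : (0:ℝ) < p.factorial := by exact_mod_cast Nat.factorial_pos p
  have qp : (0:ℝ) < q.factorial := by exact_mod_cast Nat.factorial_pos q
  calc (R.choose p : ℝ) * (L.choose q) * (k+1).factorial
      ≤ (N ^ p / p.factorial) * (N ^ q / q.factorial) *
        (p.factorial * q.factorial * m.factorial * (8 * 4 ^ k)) := by gcongr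
    _ = N ^ p * N ^ q * (8 * 4 ^ k) * m.factorial := by field_simp
    _ ≤ N ^ p * N ^ q * (8 * 4 ^ k) * (N ^ m * Y ^ (k+1)) := by gcongr
    _ = _ := by rw [hm, pow_add, pow_add]; ring

lemma num_h4 (k : ℕ) : ((k:ℝ)+1)^3 * 8 ≤ 42 * (42/16)^k := by
  rcases Nat.lt_or_ge k 2 with hk | hk
  · interval_cases k <;> norm_num
  · induction k, hk using Nat.le_induction with
    | base => norm_num
    | succ j hj ih =>
      clear * - ih hj
      have hj' : (2:ℝ) ≤ j := by exact_mod_cast hj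
      have : ((j:ℝ) + 1 + 1)^3 ≤ (42/16) * ((j:ℝ)+1)^3 := by
        obtain ⟨t, ht⟩ : ∃ t : ℝ, (j:ℝ) = 2 + t := ⟨j - 2, by ring⟩
        have ht0 : 0 ≤ t := by linarith
        rw [ht]
        have : 0 ≤ t^2 := by positivity
        have : 0 ≤ t^3 := by positivity
        nlinarith
      push_cast
      rw [pow_succ (42/16 : ℝ) j]
      nlinarith [ih]

lemma num_rot (k : ℕ) (N : ℝ) (hN : 1 ≤ N) (R L : ℕ) (hR : (R : ℝ) ≤ N) (hL : (L : ℝ) ≤ N) :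
    (Nat.card {x : Perm (Fin (k+1)) × (Fin (k+1) → Fin R) × (Fin (k+1) → Fin L) //
      Good (finRotate (k+1)) x} : ℝ) ≤
      N ^ (k+2) * (42 * max 1 ((k+1 : ℕ) / N)) ^ (k+1) := by
  have h0 := card_rot k R L
  have h1 : (Nat.card {x : Perm (Fin (k+1)) × (Fin (k+1) → Fin R) × (Fin (k+1) → Fin L) //
      Good (finRotate (k+1)) x} : ℝ) ≤
    ∑ pq ∈ (Finset.Icc 1 (k+1) ×ˢ Finset.Icc 1 (k+1)).filter (fun pq => pq.1 + pq.2 ≤ k + 2),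
      (4 ^ k * (k+1) : ℝ) * ((R.choose pq.1 : ℝ) * (L.choose pq.2) * (k+1).factorial) := by
    refine (Nat.cast_le.2 h0).trans (le_of_eq ?_)
    push_cast
    refine Finset.sum_congr rfl fun pq _ => ?_
    rw [show (4:ℝ) = 2 * 2 by norm_num, mul_pow]; ring
  refine h1.trans ?_
  set Y : ℝ := max 1 ((k+1 : ℕ) / N) with hY
  have hY1 : 1 ≤ Y := le_max_left _ _
  have h2 : ∑ pq ∈ (Finset.Icc 1 (k+1) ×ˢ Finset.Icc 1 (k+1)).filter
      (fun pq => pq.1 + pq.2 ≤ k + 2),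
      (4 ^ k * (k+1) : ℝ) * ((R.choose pq.1 : ℝ) * (L.choose pq.2) * (k+1).factorial) ≤
      ((Finset.Icc 1 (k+1) ×ˢ Finset.Icc 1 (k+1)).filter
      (fun pq => pq.1 + pq.2 ≤ k + 2)).card • ((4 ^ k * (k+1) : ℝ) *
       (N ^ (k+2) * (8 * 4 ^ k) * Y ^ (k+1))) := by
    apply Finset.sum_le_card_nsmul
    intro pq hpq
    simp only [Finset.mem_filter, Finset.mem_product, Finset.mem_Icc] at hpq
    have := num_term k pq.1 pq.2 N hN R L hR hL hpq.1.1.1 hpq.1.2.1 hpq.2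
    gcongr
  refine h2.trans ?_
  have h3 : (((Finset.Icc 1 (k+1) ×ˢ Finset.Icc 1 (k+1)).filter
      (fun pq => pq.1 + pq.2 ≤ k + 2)).card : ℝ) ≤ (k+1) ^ 2 := by
    have : ((Finset.Icc 1 (k+1) ×ˢ Finset.Icc 1 (k+1)).filter
      (fun pq => pq.1 + pq.2 ≤ k + 2)).card ≤ (k+1)^2 := by
      refine (Finset.card_filter_le _ _).trans ?_
      simp [sq]
    exact_mod_cast this
  rw [nsmul_eq_mul]
  have h4 := num_h4 k
  calc _ ≤ ((k:ℝ)+1)^2 * ((4 ^ k * (k+1) : ℝ) * (N ^ (k+2) * (8 * 4 ^ k) * Y ^ (k+1))) := by gcongr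
    _ = (((k:ℝ)+1)^3 * 8) * 16 ^ k * (N ^ (k+2) * Y ^ (k+1)) := by
      rw [show (16:ℝ) = 4 * 4 by norm_num, mul_pow]; ring
    _ ≤ (42 * (42/16)^k) * 16 ^ k * (N ^ (k+2) * Y ^ (k+1)) := by gcongr
    _ = _ := by
      rw [div_pow, mul_pow]
      field_simp
      ring
end CB

open Equiv
namespace CB

lemma sum_inv_aux {α ι β M : Type*} [Fintype α] [Fintype ι] [Fintype β] [DecidableEq α]
    [DecidableEq ι] [DecidableEq β] [CommSemiring M] (φ : β → M) (s : α → ι)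
    (hs : Function.Surjective s) :
    ∑ f ∈ (Finset.univ : Finset (α → β)).filter (fun f => ∀ x y, s x = s y → f x = f y),
      ∏ x, φ (f x) = ∏ o : ι, ∑ b, φ b ^ (Finset.univ.filter (fun x => s x = o)).card := by
  rw [Finset.prod_univ_sum]
  symm
  refine Finset.sum_bij (fun F _ => F ∘ s) ?_ ?_ ?_ ?_
  · intro F _
    simp only [Finset.mem_filter, Finset.mem_univ, true_and, Function.comp]
    intro x y h; rw [h]
  · intro F _ G _ h
    exact hs.injective_comp_right h
  · intro f hf
    simp only [Finset.mem_filter, Finset.mem_univ, true_and] at hf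
    refine ⟨fun o => f (Function.surjInv hs o), by simp, ?_⟩
    funext x
    exact hf _ _ (Function.surjInv_eq hs _)
  · intro F _
    rw [← Finset.prod_fiberwise_of_maps_to (t := Finset.univ) (g := s) (by simp)]
    refine Finset.prod_congr rfl fun o _ => ?_
    rw [Finset.prod_congr rfl (g := fun _ => φ (F o)), Finset.prod_const]
    intro x hx
    simp only [Finset.mem_filter, Finset.mem_univ, true_and] at hx
    simp [hx]

lemma inv_sameCycle {α β : Type*} (g : Perm α) (f : α → β) (hf : ∀ x, f (g x) = f x)
    {x y : α} (h : g.SameCycle x y) : f x = f y := by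
  obtain ⟨i, rfl⟩ := h
  have hn : ∀ (m : ℕ) x, f ((g ^ m) x) = f x := by
    intro m
    induction m with
    | zero => simp
    | succ m ih => intro x; rw [pow_succ', Perm.mul_apply, hf, ih]
  cases i with
  | ofNat m => simp [hn]
  | negSucc m =>
    rw [zpow_negSucc]
    have := hn (m+1) ((g ^ (m+1))⁻¹ x)
    simpa using this

/-- power sum expansion -/
lemma sum_inv {α β M : Type*} [Fintype α] [Fintype β] [DecidableEq α]
    [DecidableEq β] [CommSemiring M] (φ : β → M) (g : Perm α) :
    ∑ f ∈ (Finset.univ : Finset (α → β)).filter (fun f => ∀ x, f (g x) = f x),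
      ∏ x, φ (f x) = ((g.cycleType + Multiset.replicate (Fintype.card α - g.cycleType.sum) 1).map
        (fun k => ∑ b, φ b ^ k)).prod := by
  classical
  have hmem : ∀ x, ¬ g x = x → g.cycleOf x ∈ g.cycleFactorsFinset := fun x hx =>
    Perm.cycleOf_mem_cycleFactorsFinset_iff.2 (Perm.mem_support.2 hx)
  let s : α → {c // c ∈ g.cycleFactorsFinset} ⊕ {x // g x = x} := fun x =>
    if h : g x = x then Sum.inr ⟨x, h⟩ else Sum.inl ⟨g.cycleOf x, hmem x h⟩
  have s1 : ∀ x y, s x = s y → g.SameCycle x y := by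
    intro x y h
    simp only [s] at h
    split_ifs at h with h1 h2 h2
    · simp at h; rw [h]
    · simp at h
      rw [Perm.sameCycle_iff_cycleOf_eq_of_mem_support (Perm.mem_support.2 h1) (Perm.mem_support.2 h2)]
      exact h
  have s2 : ∀ x, s (g x) = s x := by
    intro x
    by_cases h : g x = x
    · rw [h]
    · have h' : ¬ g (g x) = g x := fun e => h (g.injective e)
      simp only [s, h, h', dif_neg, not_false_iff]
      simp [Perm.cycleOf_self_apply]
  have hs : Function.Surjective s := by
    rintro (⟨c, hc⟩ | ⟨x, hx⟩)
    · have hc' := hc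
      rw [Perm.mem_cycleFactorsFinset_iff] at hc'
      obtain ⟨x, hx⟩ := hc'.1.nonempty_support
      have : ¬ g x = x := by
        rw [← hc'.2 x hx]; exact Perm.mem_support.1 hx
      refine ⟨x, ?_⟩
      simp only [s, this, dif_neg, not_false_iff]
      congr 2
      exact ((Perm.cycle_is_cycleOf hx hc)).symm
    · exact ⟨x, by simp [s, hx]⟩
  have e1 : ((Finset.univ : Finset (α → β)).filter (fun f => ∀ x, f (g x) = f x)) =
     (Finset.univ : Finset (α → β)).filter (fun f => ∀ x y, s x = s y → f x = f y) := by
    apply Finset.filter_congr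
    intro f _
    constructor
    · intro h x y hxy
      exact inv_sameCycle g f h (s1 x y hxy)
    · intro h x; exact h _ _ (s2 x)
  rw [e1, sum_inv_aux φ s hs, Fintype.prod_sum_type, Multiset.map_add, Multiset.prod_add]
  congr 1
  · rw [Perm.cycleType_def, Multiset.map_map]
    refine Eq.trans ?_ (Finset.prod_coe_sort g.cycleFactorsFinset
     (fun c => ∑ b, φ b ^ c.support.card))
    refine Finset.prod_congr rfl fun c _ => ?_
    congr 1; funext b; congr 2
    ext x
    have hc := c.2
    simp only [Finset.mem_filter, Finset.mem_univ, true_and, s]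
    symm
    constructor
    · intro hx
      have h1 : ¬ g x = x := by
        rw [← (Perm.mem_cycleFactorsFinset_iff.1 hc).2 x hx]; exact Perm.mem_support.1 hx
      rw [dif_neg h1]
      congr 1
      exact Subtype.ext (Perm.cycle_is_cycleOf hx hc).symm
    · intro h
      split_ifs at h with h1
      rw [Sum.inl.injEq, Subtype.ext_iff] at h
      simp only at h
      rw [← h, Perm.mem_support_cycleOf_iff]
      exact ⟨Perm.SameCycle.refl _ _, Perm.mem_support.2 h1⟩
  · have : ∀ o : {x // g x = x}, (Finset.univ.filter (fun x => s x = Sum.inr o)).card = 1 := by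
      intro o
      rw [Finset.card_eq_one]
      refine ⟨o.1, ?_⟩
      ext x
      simp only [Finset.mem_filter, Finset.mem_univ, true_and, s, Finset.mem_singleton]
      constructor
      · intro h
        split_ifs at h with h1
        rw [Sum.inr.injEq, Subtype.ext_iff] at h
        exact h
      · rintro rfl
        simp [o.2]
    simp only [this, Finset.prod_const, Multiset.map_replicate, Multiset.prod_replicate]
    congr 1
    rw [Perm.sum_cycleType, Finset.card_univ, Fintype.card_subtype, ← Finset.card_compl]
    congr 1
    ext x; simp

lemma card_inv {α β : Type*} [Fintype α] [Fintype β] [DecidableEq α] [DecidableEq β] (g : Perm α) :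
   ((Finset.univ : Finset (α → β)).filter (fun f => ∀ x, f (g x) = f x)).card =
     Fintype.card β ^ (g.cycleType.card + (Fintype.card α - g.cycleType.sum)) := by
  have := sum_inv (fun _ : β => (1:ℕ)) g
  simpa [pow_add] using this
end CB

open Equiv
namespace CB

lemma good_transport {α β : Type*} [Fintype α] [Fintype β] [DecidableEq α] [DecidableEq β] {R L : ℕ}
    (e : α ≃ β) (π : Perm α) :
    Nat.card {x : Perm α × (α → Fin R) × (α → Fin L) // Good π x} ≤
    Nat.card {x : Perm β × (β → Fin R) × (β → Fin L) // Good (e.permCongr π) x} := by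
  refine Nat.card_le_card_of_injective
    (fun x => ⟨(e.permCongr x.1.1, x.1.2.1 ∘ e.symm, x.1.2.2 ∘ e.symm), ?_, ?_⟩) ?_
  · intro i
    have := x.2.1 (e.symm i)
    simpa [Equiv.permCongr_apply] using this
  · intro i
    have := x.2.2 (e.symm i)
    have h2 : (e.permCongr x.1.1)⁻¹ = e.permCongr (x.1.1⁻¹) := by
      ext; simp [Equiv.permCongr_def, Perm.inv_def]
    simp only [h2]
    simpa [Equiv.permCongr_apply] using this
  · rintro ⟨⟨a, b, c⟩, h⟩ ⟨⟨a', b', c'⟩, h'⟩ hh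
    have hh := Subtype.ext_iff.1 hh
    simp only [Prod.mk.injEq] at hh
    obtain ⟨h1, h2, h3⟩ := hh
    have h1 := e.permCongr.injective h1
    have h2 := e.symm.surjective.injective_comp_right h2
    have h3 := e.symm.surjective.injective_comp_right h3
    subst h1 h2 h3
    rfl

lemma merge_inv {α β : Type*} [DecidableEq α] (τ : Perm α) (x y : α) (h : α → β)
    [DecidablePred (τ.SameCycle y)] (hh : ∀ i, h (τ i) = h i) :
    ∀ i, (fun z => if τ.SameCycle y z then h x else h z) ((τ * swap x y) i) =
      (fun z => if τ.SameCycle y z then h x else h z) i := by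
  intro i
  have hs : ∀ z, (τ.SameCycle y (τ z) ↔ τ.SameCycle y z) := fun z => Perm.sameCycle_apply_right
  simp only [Perm.mul_apply, hs, hh]
  by_cases h1 : i = x
  · subst h1; simp [Perm.SameCycle.refl]
  · by_cases h2 : i = y
    · subst h2; simp [Perm.SameCycle.refl]
    · rw [swap_apply_of_ne_of_ne h1 h2]

lemma merge_T {α : Type*} [Fintype α] [DecidableEq α] {R L : ℕ} (π : Perm α) (u v : α) :
    Nat.card {x : Perm α × (α → Fin R) × (α → Fin L) // Good π x} ≤
    L * Nat.card {x : Perm α × (α → Fin R) × (α → Fin L) // Good (π * swap u v) x} := by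
  classical
  have : L * Nat.card {x : Perm α × (α → Fin R) × (α → Fin L) // Good (π * swap u v) x} =
      Nat.card (Fin L × {x : Perm α × (α → Fin R) × (α → Fin L) // Good (π * swap u v) x}) := by
    rw [Nat.card_prod]; simp
  rw [this]
  refine Nat.card_le_card_of_injective
    (fun g => ⟨g.1.2.2 v, ⟨(g.1.1, g.1.2.1, 
      fun z => if (g.1.1⁻¹ * π).SameCycle v z then g.1.2.2 u else g.1.2.2 z), ?_, ?_⟩⟩) ?_
  · exact g.2.1
  · have := merge_inv (g.1.1⁻¹ * π) u v g.1.2.2 g.2.2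
    intro i
    have := this i
    simp only [Perm.mul_apply] at this ⊢
    first | exact this | (refine Eq.trans ?_ this; congr)
  · rintro ⟨⟨a, b, c⟩, h⟩ ⟨⟨a', b', c'⟩, h'⟩ hh
    simp only [Subtype.mk.injEq, Prod.mk.injEq] at hh
    obtain ⟨h0, h1, h2, h3⟩ := hh
    subst h1 h2
    congr 3
    funext z
    by_cases hz : (a⁻¹ * π).SameCycle v z
    · rw [← inv_sameCycle _ c h.2 hz, ← inv_sameCycle _ c' h'.2 hz, h0]
    · have := congrFun h3 z
      simpa [hz] using this

lemma merge_const {α β : Type*} [Fintype α] [DecidableEq α] (π : Perm α) (x y : α)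
    (hxy : ¬ π.SameCycle y x) (h : α → β) (hh : ∀ i, h ((π * swap x y) i) = h i) :
    h x = h y ∧ ∀ i, h (π i) = h i := by
  have h1 : h (π y) = h x := by simpa using hh x
  have h2 : h (π x) = h y := by simpa using hh y
  have h3 : ∀ z, z ≠ x → z ≠ y → h (π z) = h z := by
    intro z hx hy
    simpa [swap_apply_of_ne_of_ne hx hy] using hh z
  have key : h x = h y := by
    by_contra hne
    have : ∀ j : ℕ, h ((π ^ (j+1)) y) = h x := by
      intro j
      induction j with
      | zero => simpa using h1
      | succ j ih =>
        rw [pow_succ', Perm.mul_apply, h3 _ _ _, ih]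
        · intro e
          exact hxy ⟨(j+1 : ℕ), by rw [zpow_natCast]; exact e⟩
        · intro e; rw [e] at ih; exact hne ih.symm
    have h4 := this (orderOf π - 1)
    rw [Nat.sub_add_cancel (orderOf_pos π), pow_orderOf_eq_one] at h4
    exact hne (by simpa using h4.symm)
  refine ⟨key, fun i => ?_⟩
  by_cases hx : i = x
  · rw [hx, h2, key]
  · by_cases hy : i = y
    · rw [hy, h1, key]
    · exact h3 i hx hy

/-- number of orbits -/
def cyc {α : Type*} [Fintype α] [DecidableEq α] (π : Perm α) : ℕ :=
  π.cycleType.card + (Fintype.card α - π.cycleType.sum)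

lemma cyc_pos {α : Type*} [Fintype α] [DecidableEq α] [Nonempty α] (π : Perm α) : 1 ≤ cyc π := by
  have := card_inv (β := Bool) π
  by_contra h
  have h0 : cyc π = 0 := by omega
  rw [cyc] at h0
  rw [h0, pow_zero, Finset.card_eq_one] at this
  obtain ⟨f, hf⟩ := this
  have h1 : (fun _ => true) ∈ ({f} : Finset (α → Bool)) := by rw [← hf]; simp
  have h2 : (fun _ => false) ∈ ({f} : Finset (α → Bool)) := by rw [← hf]; simp
  rw [Finset.mem_singleton] at h1 h2
  have := h1.trans h2.symm
  have := congrFun this (Classical.arbitrary α)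
  simp at this

lemma cyc_merge {α : Type*} [Fintype α] [DecidableEq α] (π : Perm α) (x y : α)
    (hxy : ¬ π.SameCycle y x) : cyc (π * swap x y) + 1 ≤ cyc π := by
  classical
  have h1 := card_inv (β := Bool) π
  have h2 := card_inv (β := Bool) (π * swap x y)
  change _ = _ ^ cyc _ at h1
  change _ = _ ^ cyc _ at h2
  rw [Fintype.card_bool] at h1 h2
  have h3 : 2 ^ (cyc (π * swap x y) + 1) ≤ 2 ^ cyc π := by
    rw [pow_succ, ← h1, ← h2]
    rw [show ∀ m : ℕ, m * 2 = m * (Finset.univ : Finset Bool).card by simp, ← Finset.card_product]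
    apply Finset.card_le_card_of_injOn (fun p z => if π.SameCycle y z then p.2 else p.1 z)
    · intro p hp
      simp only [Finset.coe_product, Set.mem_prod, Finset.mem_coe, Finset.mem_filter,
        Finset.mem_univ, true_and, and_true] at hp ⊢
      intro i
      rw [(merge_const π x y hxy p.1 hp).2]
      simp [Perm.sameCycle_apply_right]
    · rintro ⟨h, b⟩ hp ⟨h', b'⟩ hp' e
      simp only [Finset.coe_product, Set.mem_prod, Finset.mem_coe, Finset.mem_filter,
        Finset.mem_univ, true_and, and_true] at hp hp'
      simp only at e
      have c := merge_const π x y hxy h hp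
      have c' := merge_const π x y hxy h' hp'
      have hb : b = b' := by
        have := congrFun e y
        simpa [Perm.SameCycle.refl] using this
      have hx : h x = h' x := by
        have := congrFun e x
        simpa [hxy] using this
      subst hb
      congr 1
      funext z
      by_cases hz : π.SameCycle y z
      · rw [← inv_sameCycle π h c.2 hz, ← inv_sameCycle π h' c'.2 hz, ← c.1, ← c'.1, hx]
      · have := congrFun e z
        simpa [hz] using this
  exact (Nat.pow_le_pow_iff_right (by norm_num)).1 h3

lemma T_induct {α : Type*} [Fintype α] [DecidableEq α] [Nonempty α] {R L : ℕ} (hL : 1 ≤ L) (B : ℕ)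
    (hB : ∀ π : Perm α, (∀ x y, π.SameCycle x y) →
      Nat.card {x : Perm α × (α → Fin R) × (α → Fin L) // Good π x} ≤ B) (c : ℕ) :
    ∀ π : Perm α, cyc π ≤ c + 1 →
      Nat.card {x : Perm α × (α → Fin R) × (α → Fin L) // Good π x} ≤ L ^ c * B := by
  induction c with
  | zero =>
    intro π hπ
    rw [pow_zero, one_mul]
    apply hB
    intro x y
    by_contra hxy
    have := cyc_merge π y x hxy
    have := cyc_pos (π * swap y x)
    omega
  | succ c ih =>
    intro π hπ
    by_cases h : ∀ x y, π.SameCycle x y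
    · exact (hB π h).trans (Nat.le_mul_of_pos_left _ (by positivity))
    · push Not at h
      obtain ⟨x, y, hxy⟩ := h
      have h1 := cyc_merge π y x hxy
      refine (merge_T π y x).trans ?_
      rw [pow_succ', mul_assoc]
      exact Nat.mul_le_mul_left _ (ih _ (by omega))

lemma transitive_conj (k : ℕ) (π : Perm (Fin (k+1))) (h : ∀ x y, π.SameCycle x y) :
    ∃ e : Perm (Fin (k+1)), e.permCongr π = finRotate (k+1) := by
  rcases k with _ | k
  · exact ⟨1, by ext x; omega⟩
  have hc : π.cycleType = (finRotate (k+2)).cycleType := by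
    rw [cycleType_finRotate]
    have hne : ∀ x, π x ≠ x := by
      intro x hx
      obtain ⟨y, hy⟩ := exists_ne x
      obtain ⟨i, hi⟩ := h x y
      rw [Perm.zpow_apply_eq_self_of_apply_eq_self hx] at hi
      exact hy hi.symm
    have hcyc : π.IsCycle := ⟨0, hne 0, fun y _ => h 0 y⟩
    rw [hcyc.cycleType]
    have : π.support = Finset.univ := by ext x; simp [hne]
    rw [this]; simp
  obtain ⟨e, he⟩ := isConj_iff.1 (Perm.isConj_iff_cycleType_eq.2 hc)
  refine ⟨e, ?_⟩
  rw [← he]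
  ext x; simp

lemma T_bound {α : Type*} [Fintype α] [DecidableEq α] [Nonempty α] (π : Perm α) (hfix : ∀ x, π x ≠ x)
    (N : ℝ) (hN : 1 ≤ N) (R L : ℕ) (hR : (R : ℝ) ≤ N) (hL : (L : ℝ) ≤ N) :
    (Nat.card {x : Perm α × (α → Fin R) × (α → Fin L) // Good π x} : ℝ) ≤
      N ^ (Fintype.card α + π.cycleType.card) *
        (42 * max 1 ((Fintype.card α : ℝ) / N)) ^ (Fintype.card α) := by
  have hs : π.cycleType.sum = Fintype.card α := by
    rw [Perm.sum_cycleType, ← Finset.card_univ]; congr 1; ext x; simp [hfix]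
  have hcyc : cyc π = π.cycleType.card := by simp [cyc, hs]
  have hpos := cyc_pos π
  obtain ⟨r, hr⟩ : ∃ r, cyc π = r + 1 := ⟨cyc π - 1, by omega⟩
  obtain ⟨k, hk⟩ : ∃ k, Fintype.card α = k + 1 := ⟨Fintype.card α - 1, by
    have := Fintype.card_pos (α := α); omega⟩
  rcases Nat.eq_zero_or_pos L with hL0 | hL1
  · subst hL0
    have : IsEmpty {x : Perm α × (α → Fin R) × (α → Fin 0) // Good π x} :=
      ⟨fun x => (x.1.2.2 (Classical.arbitrary α)).elim0⟩
    rw [Nat.card_eq_zero.2 (Or.inl this)]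
    push_cast
    positivity
  let e : α ≃ Fin (k+1) := Fintype.equivFinOfCardEq hk
  let B := Nat.card {x : Perm (Fin (k+1)) × (Fin (k+1) → Fin R) × (Fin (k+1) → Fin L) //
      Good (finRotate (k+1)) x}
  have h1 := T_induct (α := α) (R := R) hL1 B (by
    intro π h
    refine (good_transport e π).trans ?_
    have ht : ∀ x y, (e.permCongr π).SameCycle x y := by
      intro x y
      obtain ⟨i, hi⟩ := h (e.symm x) (e.symm y)
      refine ⟨i, ?_⟩
      have : (e.permCongr π) ^ i = e.permCongr (π ^ i) := by
        have := map_zpow (e.permCongrHom) π i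
        exact this.symm
      rw [this]
      simp [Equiv.permCongr_apply, hi]
    obtain ⟨e', he'⟩ := transitive_conj k _ ht
    refine (good_transport e' _).trans ?_
    rw [he']) r π (by omega)
  have h2 := num_rot k N hN R L hR hL
  have h3 : (Nat.card {x : Perm α × (α → Fin R) × (α → Fin L) // Good π x} : ℝ) ≤ (L:ℝ) ^ r * B := by
    exact_mod_cast h1
  refine h3.trans ?_
  rw [← hcyc, hr, hk]
  calc (L:ℝ) ^ r * B ≤ N ^ r * (N ^ (k+2) * (42 * max 1 ((k+1 : ℕ) / N)) ^ (k+1)) := by gcongr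
    _ = _ := by ring
end CB

open Equiv
namespace CB

noncomputable def aco (n : ℕ) (l : Fin n → ℕ) (k : Multiset ℕ) : ℤ :=
  MvPolynomial.coeff
    (Finsupp.equivFunOnFinite.symm l)
    ((Multiset.map (fun m => ∑ i : Fin n, MvPolynomial.X i ^ m) k).prod *
      ∑ w : Equiv.Perm (Fin n),
        MvPolynomial.C ((Equiv.Perm.sign w : ℤ)) *
          ∏ i : Fin n, MvPolynomial.X i ^ (n - 1 - ((w i : ℕ))))

lemma frob_eq_aco (n : ℕ) (lam : Fin n → ℕ) (k : Multiset ℕ) :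
    frobChar n lam k = aco n (fun i => lam i + (n - 1 - (i : ℕ))) k := rfl

/-- content of a word -/
def cont {n : ℕ} (f : Fin n → Fin n) (i : Fin n) : ℕ := (Finset.univ.filter (fun x => f x = i)).card

lemma prod_X_eq {n : ℕ} (d : Fin n → ℕ) :
    (∏ i : Fin n, (MvPolynomial.X i : MvPolynomial (Fin n) ℤ) ^ d i) =
      MvPolynomial.monomial (Finsupp.equivFunOnFinite.symm d) 1 := by
  rw [MvPolynomial.monomial_eq, Finsupp.prod_fintype _ _ (by simp)]
  simp

lemma prod_X_cont {n : ℕ} (f : Fin n → Fin n) :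
    (∏ x : Fin n, (MvPolynomial.X (f x) : MvPolynomial (Fin n) ℤ)) =
      MvPolynomial.monomial (Finsupp.equivFunOnFinite.symm (cont f)) 1 := by
  rw [← prod_X_eq, ← Finset.prod_fiberwise_of_maps_to (t := Finset.univ) (g := f) (by simp)]
  refine Finset.prod_congr rfl fun i _ => ?_
  rw [Finset.prod_congr rfl (g := fun _ => MvPolynomial.X i), Finset.prod_const]
  · rfl
  · intro x hx
    simp only [Finset.mem_filter, Finset.mem_univ, true_and] at hx
    rw [hx]

lemma aco_full {n : ℕ} (l : Fin n → ℕ) (g : Perm (Fin n)) :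
    aco n l (fullCycleType g) = ∑ w : Perm (Fin n), ∑ f : Fin n → Fin n,
      if (∀ x, f (g x) = f x) ∧ (∀ i, cont f i + (n - 1 - (w i : ℕ)) = l i) then (Perm.sign w : ℤ)
        else 0 := by
  have h := sum_inv (fun i : Fin n => (MvPolynomial.X i : MvPolynomial (Fin n) ℤ)) g
  rw [Fintype.card_fin] at h
  unfold aco fullCycleType
  rw [← h, Finset.sum_mul_sum, MvPolynomial.coeff_sum, Finset.sum_filter, Finset.sum_comm]
  refine Finset.sum_congr rfl fun f _ => ?_
  by_cases hf : ∀ x, f (g x) = f x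
  · rw [if_pos hf, MvPolynomial.coeff_sum]
    refine Finset.sum_congr rfl fun w _ => ?_
    rw [prod_X_cont, prod_X_eq (fun i => n - 1 - (w i : ℕ)), mul_left_comm,
      MvPolynomial.monomial_mul, MvPolynomial.coeff_C_mul, MvPolynomial.coeff_monomial]
    have : (Finsupp.equivFunOnFinite.symm (cont f) +
      Finsupp.equivFunOnFinite.symm (fun i => n - 1 - (w i : ℕ)) = Finsupp.equivFunOnFinite.symm l) ↔
      ((∀ x, f (g x) = f x) ∧ (∀ i, cont f i + (n - 1 - (w i : ℕ)) = l i)) := by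
      simp only [hf, implies_true, true_and]
      constructor
      · intro h i
        have := DFunLike.congr_fun h i
        simpa using this
      · intro h
        ext i
        simpa using h i
    simp only [this]
    split_ifs <;> simp
  · simp [hf]

lemma aco_nil {n : ℕ} (l : Fin n → ℕ) :
    aco n l 0 = ∑ w : Perm (Fin n), if ∀ i, n - 1 - (w i : ℕ) = l i then (Perm.sign w : ℤ) else 0 := by
  unfold aco
  rw [Multiset.map_zero, Multiset.prod_zero, one_mul, MvPolynomial.coeff_sum]
  refine Finset.sum_congr rfl fun w _ => ?_
  rw [prod_X_eq (fun i => n - 1 - (w i : ℕ)), MvPolynomial.coeff_C_mul, MvPolynomial.coeff_monomial]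
  have : (Finsupp.equivFunOnFinite.symm (fun i => n - 1 - (w i : ℕ)) =
      Finsupp.equivFunOnFinite.symm l) ↔ ∀ i, n - 1 - (w i : ℕ) = l i := by
    rw [Equiv.apply_eq_iff_eq, funext_iff]
  simp only [this]
  split_ifs <;> simp

lemma aco_cons {n : ℕ} (l : Fin n → ℕ) (k : ℕ) (ks : Multiset ℕ) :
    aco n l (k ::ₘ ks) = ∑ i, if k ≤ l i then aco n (Function.update l i (l i - k)) ks else 0 := by
  unfold aco
  rw [Multiset.map_cons, Multiset.prod_cons, mul_assoc, Finset.sum_mul, MvPolynomial.coeff_sum]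
  refine Finset.sum_congr rfl fun i _ => ?_
  rw [MvPolynomial.X_pow_eq_monomial, MvPolynomial.coeff_monomial_mul']
  have : Finsupp.single i k ≤ Finsupp.equivFunOnFinite.symm l ↔ k ≤ l i := by
    rw [Finsupp.single_le_iff]; simp
  simp only [this, one_mul]
  split_ifs with h
  · congr 1
    ext j
    by_cases hj : j = i
    · subst hj; simp
    · simp [hj]
  · rfl

lemma aco_perm {n : ℕ} (ks : Multiset ℕ) (l : Fin n → ℕ) (σ : Perm (Fin n)) :
    aco n (l ∘ σ) ks = Perm.sign σ * aco n l ks := by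
  induction ks using Multiset.induction generalizing l with
  | empty =>
    rw [aco_nil, aco_nil, Finset.mul_sum]
    refine Fintype.sum_equiv (Equiv.mulRight σ⁻¹) _ _ fun w => ?_
    have : (∀ i, n - 1 - (w i : ℕ) = (l ∘ σ) i) ↔ 
      ∀ i, n - 1 - ((Equiv.mulRight σ⁻¹ w) i : ℕ) = l i := by
      simp only [Equiv.coe_mulRight, Perm.mul_apply, Function.comp]
      constructor
      · intro h i
        have := h (σ⁻¹ i)
        simpa using this
      · intro h i
        have := h (σ i)
        simpa using this
    simp only [this]
    split_ifs with h
    · rw [Equiv.coe_mulRight, Perm.sign_mul, Perm.sign_inv, mul_comm]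
      push_cast
      rw [mul_assoc]
      have : ((Perm.sign σ : ℤˣ) : ℤ) * (Perm.sign σ : ℤˣ) = 1 := by
        rw [← Units.val_mul, Int.units_mul_self]; rfl
      rw [this, mul_one]
    · simp
  | cons k ks ih =>
    rw [aco_cons, aco_cons, Finset.mul_sum]
    refine Fintype.sum_equiv σ _ _ fun i => ?_
    simp only [Function.comp]
    split_ifs with h
    · rw [← ih]
      congr 1
      funext j
      by_cases hj : j = i
      · subst hj; simp
      · simp [hj]
    · simp

lemma aco_rep {n : ℕ} (ks : Multiset ℕ) (l : Fin n → ℕ) (i j : Fin n) (hij : i ≠ j)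
    (h : l i = l j) : aco n l ks = 0 := by
  have h1 := aco_perm ks l (swap i j)
  have h2 : l ∘ (swap i j) = l := by
    funext x
    simp only [Function.comp, swap_apply_def]
    split_ifs with h3 h4
    · rw [h3, h]
    · rw [h4, h]
    · rfl
  rw [h2, Perm.sign_swap hij] at h1
  simp at h1
  omega

/-- values -/
def vl {n : ℕ} : Fin n ⊕ Fin n → ℕ := Sum.elim (fun i => n - 1 - (i : ℕ)) (fun j => n + j)

lemma vl_inj {n : ℕ} : Function.Injective (vl (n := n)) := by
  rintro (i | i) (j | j) h <;> simp only [vl, Sum.elim_inl, Sum.elim_inr] at h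
  · congr 1; ext; omega
  · omega
  · omega
  · congr 1; ext; omega

lemma vl_lt {n : ℕ} (z : Fin n ⊕ Fin n) : vl z < 2 * n := by
  rcases z with i | i <;> simp only [vl, Sum.elim_inl, Sum.elim_inr] <;> omega

lemma vl_surj {n : ℕ} (v : ℕ) (hv : v < 2 * n) : ∃ z : Fin n ⊕ Fin n, vl z = v := by
  by_cases h : v < n
  · exact ⟨Sum.inl ⟨n - 1 - v, by omega⟩, by simp [vl]; omega⟩
  · exact ⟨Sum.inr ⟨v - n, by omega⟩, by simp [vl]; omega⟩

lemma vl_swap {n : ℕ} (z : Fin n ⊕ Fin n) : vl z.swap + vl z + 1 = 2 * n := by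
  rcases z with i | i <;> simp only [vl, Sum.elim_inl, Sum.elim_inr, Sum.swap_inl, Sum.swap_inr] <;> omega

lemma aco_step {n : ℕ} (σ : Perm (Fin n ⊕ Fin n)) (k : ℕ) (hk : 0 < k) (ks : Multiset ℕ) :
    aco n (fun i => vl (σ (Sum.inl i))) (k ::ₘ ks) = ∑ i, ∑ j,
      if vl (σ (Sum.inl i)) = vl (σ (Sum.inr j)) + k then
        aco n (fun i' => vl ((σ * swap (Sum.inl i) (Sum.inr j)) (Sum.inl i'))) ks else 0 := by
  rw [aco_cons]
  refine Finset.sum_congr rfl fun i _ => ?_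
  split_ifs with h
  · obtain ⟨z, hz⟩ := vl_surj (n := n) (vl (σ (Sum.inl i)) - k) (by have := vl_lt (σ (Sum.inl i)); omega)
    obtain ⟨y, rfl⟩ := σ.surjective z
    rcases y with i' | j
    · have hne : i' ≠ i := by rintro rfl; omega
      rw [aco_rep ks _ i i' hne.symm]
      · symm
        apply Finset.sum_eq_zero
        intro j _
        rw [if_neg]
        intro e
        have : vl (σ (Sum.inr j)) = vl (σ (Sum.inl i')) := by omega
        have := σ.injective (vl_inj this)
        simp at this
      · simp [hne, hz]
    · rw [Finset.sum_eq_single j]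
      · rw [if_pos (by omega)]
        congr 1
        funext i'
        by_cases hi : i' = i
        · subst hi; simp [hz]
        · simp only [Function.update_of_ne hi, Perm.mul_apply]
          rw [swap_apply_of_ne_of_ne (by simpa using hi) (by simp)]
      · intro j' _ hj'
        rw [if_neg]
        intro e
        have : vl (σ (Sum.inr j')) = vl (σ (Sum.inr j)) := by omega
        have := σ.injective (vl_inj this)
        simp at this
        exact hj' this
      · simp
  · symm
    apply Finset.sum_eq_zero
    intro j _
    rw [if_neg]
    omega

lemma aco_compl {n : ℕ} (ks : Multiset ℕ) (hks : ∀ k ∈ ks, 0 < k) (σ : Perm (Fin n ⊕ Fin n)) :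
    aco n (fun i => vl (σ (Sum.inl i))) ks =
      Perm.sign σ * (-1) ^ (Multiset.card ks) * aco n (fun j => vl (σ (Sum.inr j)).swap) ks := by
  induction ks using Multiset.induction generalizing σ with
  | empty =>
    simp only [Multiset.card_zero, pow_zero, mul_one]
    by_cases h : ∀ i, ∃ j, σ (Sum.inl i) = Sum.inl j
    · obtain ⟨⟨w, v⟩, hwv⟩ := Perm.mem_sumCongrHom_range_of_perm_mapsTo_inl (σ := σ) (by
        rintro _ ⟨i, rfl⟩
        obtain ⟨j, hj⟩ := h i
        exact ⟨j, hj.symm⟩)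
      have hwv : σ = Perm.sumCongr w v := by rw [← hwv]; rfl
      have e : ∀ u : Perm (Fin n), aco n (fun i => vl (n := n) (Sum.inl (u i))) 0 = Perm.sign u := by
        intro u
        rw [aco_nil, Finset.sum_eq_single u]
        · simp [vl]
        · intro b _ hb
          rw [if_neg]
          intro h
          apply hb
          ext i
          have := h i
          simp only [vl, Sum.elim_inl] at this
          omega
        · simp
      rw [hwv]
      simp only [Perm.sumCongr_apply, Sum.map_inl, Sum.map_inr, Sum.swap_inr, e, Perm.sign_sumCongr]
      push_cast
      rw [mul_assoc]
      have : ((Perm.sign v : ℤˣ) : ℤ) * (Perm.sign v : ℤˣ) = 1 := by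
        rw [← Units.val_mul, Int.units_mul_self]; rfl
      rw [this, mul_one]
    · have h1 : aco n (fun i => vl (σ (Sum.inl i))) 0 = 0 := by
        rw [aco_nil]
        apply Finset.sum_eq_zero
        intro w _
        rw [if_neg]
        intro hw
        apply h
        intro i
        refine ⟨w i, vl_inj ?_⟩
        rw [← hw i]; rfl
      have h2 : aco n (fun j => vl (σ (Sum.inr j)).swap) 0 = 0 := by
        rw [aco_nil]
        apply Finset.sum_eq_zero
        intro w _
        rw [if_neg]
        intro hw
        apply h
        have h3 : ∀ j, σ (Sum.inr j) = Sum.inr (w j) := by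
          intro j
          have := hw j
          have h4 : (σ (Sum.inr j)).swap = Sum.inl (w j) := vl_inj (by rw [← this]; rfl)
          have := congrArg Sum.swap h4
          simpa using this
        intro i
        rcases h4 : σ (Sum.inl i) with a | b
        · exact ⟨a, rfl⟩
        · exfalso
          have := h3 (w⁻¹ b)
          rw [show w (w⁻¹ b) = b by simp, ← h4] at this
          have := σ.injective this
          simp at this
      rw [h1, h2, mul_zero]
  | cons k ks ih =>
    have hk : 0 < k := hks k (by simp)
    have ih := ih (fun k' hk' => hks k' (by simp [hk']))
    let sc : Fin n ⊕ Fin n ≃ Fin n ⊕ Fin n := Equiv.sumComm _ _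
    have hc : ∀ j, vl (σ (Sum.inr j)).swap = vl (sc.permCongr σ (Sum.inl j)) := by
      intro j; simp [sc, Equiv.permCongr_apply]
    simp only [hc]
    rw [aco_step σ k hk, aco_step (sc.permCongr σ) k hk, Finset.sum_comm, Finset.mul_sum]
    refine Finset.sum_congr rfl fun j _ => ?_
    rw [Finset.mul_sum]
    refine Finset.sum_congr rfl fun i _ => ?_
    have e1 : vl (sc.permCongr σ (Sum.inl j)) = vl (σ (Sum.inr j)).swap := (hc j).symm
    have e2 : vl (sc.permCongr σ (Sum.inr i)) = vl (σ (Sum.inl i)).swap := by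
      simp [sc, Equiv.permCongr_apply]
    have h1 := vl_swap (σ (Sum.inr j))
    have h2 := vl_swap (σ (Sum.inl i))
    have e3 : (vl (sc.permCongr σ (Sum.inl j)) = vl (sc.permCongr σ (Sum.inr i)) + k) ↔
        vl (σ (Sum.inl i)) = vl (σ (Sum.inr j)) + k := by
      rw [e1, e2]; omega
    simp only [e3]
    split_ifs with hh
    · rw [ih, Perm.sign_mul, Perm.sign_swap (by simp), Multiset.card_cons, pow_succ]
      have : (fun j' => vl ((σ * swap (Sum.inl i) (Sum.inr j)) (Sum.inr j')).swap) =
        (fun i' => vl ((sc.permCongr σ * swap (Sum.inl j) (Sum.inr i)) (Sum.inl i'))) := by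
        funext j'
        by_cases hj : j' = j
        · subst hj; simp [sc, Equiv.permCongr_apply]
        · simp only [Perm.mul_apply]
          rw [swap_apply_of_ne_of_ne (by simp) (by simpa using hj),
            swap_apply_of_ne_of_ne (by simpa using hj) (by simp)]
          exact congrArg _ (by simp [sc, Equiv.permCongr_apply])
      rw [this]
      push_cast
      ring
    · simp
end CB

open Equiv
namespace CB

/-- signed indicator of row group times column group -/
def ee {n : ℕ} (r c : Fin n → Fin n) (p q : Perm (Fin n)) : ℤ :=
  if (∀ x, r (p x) = r x) ∧ (∀ x, c (q x) = c x) then (Perm.sign q : ℤ) else 0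

lemma comp_swap_eq {α β : Type*} [DecidableEq α] (f : α → β) (x y : α) (h : f x = f y) (z : α) :
    f (swap x y z) = f z := by
  rw [swap_apply_def]
  split_ifs with h3 h4
  · rw [h3, h]
  · rw [h4, h]
  · rfl

lemma ee_mul_swap {n : ℕ} (r c : Fin n → Fin n) (p q : Perm (Fin n)) (x y : Fin n) (hxy : x ≠ y)
    (h : c x = c y) : ee r c p (q * swap x y) = - ee r c p q := by
  unfold ee
  have : (∀ z, c ((q * swap x y) z) = c z) ↔ ∀ z, c (q z) = c z := by
    constructor
    · intro h1 z
      have := h1 (swap x y z)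
      simpa [comp_swap_eq c x y h] using this
    · intro h1 z
      rw [Perm.mul_apply, h1, comp_swap_eq c x y h]
  simp only [this]
  split_ifs
  · rw [Perm.sign_mul, Perm.sign_swap hxy]; simp
  · simp

lemma ee_swap_mul {n : ℕ} (r c : Fin n → Fin n) (p q : Perm (Fin n)) (x y : Fin n) 
    (h : r x = r y) : ee r c (swap x y * p) q = ee r c p q := by
  unfold ee
  have : (∀ z, r ((swap x y * p) z) = r z) ↔ ∀ z, r (p z) = r z := by
    simp only [Perm.mul_apply, comp_swap_eq r x y h]
  simp only [this]

lemma lem2b {n : ℕ} (r c : Fin n → Fin n) (l : Fin n → ℕ)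
    (h : ∑ p : Perm (Fin n), ∑ q : Perm (Fin n), ee r c p q * aco n l (fullCycleType (p * q)) ≠ 0) :
    ∃ (f : Fin n → Fin n) (w : Perm (Fin n)), (∀ x y, c x = c y → f x = f y → x = y) ∧
      ∀ i, cont f i + (n - 1 - (w i : ℕ)) = l i := by
  by_contra hcon
  push Not at hcon
  apply h
  apply Finset.sum_eq_zero
  intro p _
  simp only [aco_full, Finset.mul_sum]
  rw [Finset.sum_comm]
  apply Finset.sum_eq_zero
  intro w _
  rw [Finset.sum_comm]
  apply Finset.sum_eq_zero
  intro f _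
  by_cases hf : ∀ x y, c x = c y → f x = f y → x = y
  · obtain ⟨i, hi⟩ := hcon f w hf
    apply Finset.sum_eq_zero
    intro q _
    rw [if_neg, mul_zero]
    exact fun h => hi (h.2 i)
  · push Not at hf
    obtain ⟨x, y, hc, hfxy, hne⟩ := hf
    have := Fintype.sum_equiv (Equiv.mulRight (swap x y)) (fun q => - (ee r c p q *
      if (∀ x, f ((p * q) x) = f x) ∧ (∀ i, cont f i + (n - 1 - (w i : ℕ)) = l i) 
        then (Perm.sign w : ℤ) else 0)) (fun q => (ee r c p q *
      if (∀ x, f ((p * q) x) = f x) ∧ (∀ i, cont f i + (n - 1 - (w i : ℕ)) = l i) 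
        then (Perm.sign w : ℤ) else 0)) (by
      intro q
      rw [Equiv.coe_mulRight, ee_mul_swap r c p q x y hne hc, neg_mul]
      have : (∀ z, f ((p * q) z) = f z) ↔ ∀ z, f ((p * (q * swap x y)) z) = f z := by
        rw [← mul_assoc]
        constructor
        · intro h1 z
          rw [Perm.mul_apply, h1, comp_swap_eq f x y hfxy]
        · intro h1 z
          have := h1 (swap x y z)
          simpa [comp_swap_eq f x y hfxy] using this
      simp only [this])
    rw [Finset.sum_neg_distrib] at this
    omega

/-- conjugate partition -/
def conj {n : ℕ} (lam : Fin n → ℕ) (j : Fin n) : ℕ :=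
  (Finset.univ.filter (fun i : Fin n => (j : ℕ) < lam i)).card

lemma conj_iff {n : ℕ} (lam : Fin n → ℕ) (ha : Antitone lam) (i j : Fin n) :
    (i : ℕ) < conj lam j ↔ (j : ℕ) < lam i := by
  unfold conj
  constructor
  · intro h
    by_contra hc
    have : (Finset.univ.filter (fun i : Fin n => (j : ℕ) < lam i)) ⊆ Finset.Iio i := by
      intro i' hi'
      simp only [Finset.mem_filter, Finset.mem_univ, true_and, Finset.mem_Iio] at hi' ⊢
      by_contra hle
      exact hc (hi'.trans_le (ha (not_lt.1 hle)))
    have := Finset.card_le_card this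
    rw [Fin.card_Iio] at this
    omega
  · intro h
    have : Finset.Iic i ⊆ (Finset.univ.filter (fun i : Fin n => (j : ℕ) < lam i)) := by
      intro i' hi'
      simp only [Finset.mem_filter, Finset.mem_univ, true_and, Finset.mem_Iic] at hi' ⊢
      exact h.trans_le (ha hi')
    have := Finset.card_le_card this
    rw [Fin.card_Iic] at this
    omega

lemma conj_anti {n : ℕ} (lam : Fin n → ℕ) : Antitone (conj lam) := by
  intro i j hij
  apply Finset.card_le_card
  intro x
  simp only [Finset.mem_filter, Finset.mem_univ, true_and]
  intro h
  exact lt_of_le_of_lt (by exact_mod_cast hij) h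

lemma conj_le {n : ℕ} (lam : Fin n → ℕ) (j) : conj lam j ≤ n := by
  refine (Finset.card_filter_le _ _).trans ?_
  simp

lemma conj_sum {n : ℕ} (lam : Fin n → ℕ) (h : ∀ i, lam i ≤ n) : ∑ j, conj lam j = ∑ i, lam i := by
  unfold conj
  simp only [Finset.card_filter]
  rw [Finset.sum_comm]
  refine Finset.sum_congr rfl fun i _ => ?_
  rw [← Finset.card_filter]
  have := @Fin.card_filter_val_lt n (lam i)
  simpa [h i] using this

/-- a tableau: bijection of `Fin n` with boxes -/
structure Tab {n : ℕ} (lam : Fin n → ℕ) where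
  r : Fin n → Fin n
  c : Fin n → Fin n
  inj : ∀ x y, r x = r y → c x = c y → x = y
  mem : ∀ x, (c x : ℕ) < lam (r x)
  surj : ∀ i j : Fin n, (j : ℕ) < lam i → ∃ x, r x = i ∧ c x = j

lemma le_of_sum {n : ℕ} (lam : Fin n → ℕ) (hs : ∑ i, lam i = n) (i : Fin n) : lam i ≤ n := by
  calc lam i ≤ ∑ i, lam i := Finset.single_le_sum (f := lam) (fun _ _ => Nat.zero_le _) (Finset.mem_univ i)
    _ = n := hs

lemma exists_tab {n : ℕ} (lam : Fin n → ℕ) (hs : ∑ i, lam i = n) : Nonempty (Tab lam) := by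
  have hc : Fintype.card (Σ i, Fin (lam i)) = n := by simp [hs]
  let e := Fintype.equivFinOfCardEq hc
  refine ⟨⟨fun x => (e.symm x).1, fun x => ⟨(e.symm x).2, (e.symm x).2.2.trans_le (le_of_sum lam hs _)⟩,
    ?_, ?_, ?_⟩⟩
  · intro x y h1 h2
    apply e.symm.injective
    have h2' : ((e.symm x).2 : ℕ) = (e.symm y).2 := Fin.ext_iff.1 h2
    have key : ∀ a b : (Σ i, Fin (lam i)), a.1 = b.1 → (a.2 : ℕ) = b.2 → a = b := by
      rintro ⟨a, b⟩ ⟨a', b'⟩ e1 e2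
      simp only at e1 e2
      subst e1
      rw [Fin.ext e2]
    exact key _ _ h1 h2'
  · intro x; exact (e.symm x).2.2
  · intro i j h
    refine ⟨e ⟨i, ⟨j, h⟩⟩, ?_, Fin.ext ?_⟩
    · simp only [Equiv.symm_apply_apply]
    · simp only
      rw [Equiv.symm_apply_apply]

def Tab.swap {n : ℕ} {lam : Fin n → ℕ} (T : Tab lam) (ha : Antitone lam) : Tab (conj lam) where
  r := T.c
  c := T.r
  inj := fun x y h1 h2 => T.inj x y h2 h1
  mem := fun x => (conj_iff lam ha _ _).2 (T.mem x)
  surj := fun i j h => by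
    obtain ⟨x, h1, h2⟩ := T.surj j i ((conj_iff lam ha _ _).1 h)
    exact ⟨x, h2, h1⟩

lemma Tab.cont_r {n : ℕ} {lam : Fin n → ℕ} (T : Tab lam) (hs : ∑ i, lam i = n) (i : Fin n) :
    cont T.r i = lam i := by
  unfold cont
  have := @Fin.card_filter_val_lt n (lam i)
  rw [min_eq_right (le_of_sum lam hs i)] at this
  rw [← this]
  apply Finset.card_bij (fun x _ => T.c x)
  · intro x hx
    simp only [Finset.mem_filter, Finset.mem_univ, true_and] at hx ⊢
    rw [← hx]; exact T.mem x
  · intro x hx y hy h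
    simp only [Finset.mem_filter, Finset.mem_univ, true_and] at hx hy
    exact T.inj x y (hx.trans hy.symm) h
  · intro j hj
    simp only [Finset.mem_filter, Finset.mem_univ, true_and] at hj
    obtain ⟨x, h1, h2⟩ := T.surj i j hj
    exact ⟨x, by simp [h1], h2⟩

lemma sum_cont {n : ℕ} (f : Fin n → Fin n) (cc : Fin n → ℤ) :
    ∑ x, cc (f x) = ∑ i, (cont f i : ℤ) * cc i := by
  rw [← Finset.sum_fiberwise_of_maps_to (t := Finset.univ) (g := f) (by simp)]
  refine Finset.sum_congr rfl fun i _ => ?_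
  rw [Finset.sum_congr rfl (g := fun _ => cc i), Finset.sum_const]
  · simp [cont]
  · intro x hx
    simp only [Finset.mem_filter, Finset.mem_univ, true_and] at hx
    rw [hx]

lemma lower_sum {n : ℕ} (F G : Finset (Fin n)) (hcard : F.card = G.card)
    (hG : ∀ i ∈ G, ∀ j ≤ i, j ∈ G) (cc : Fin n → ℤ) (hcc : Antitone cc) :
    ∑ i ∈ F, cc i ≤ ∑ i ∈ G, cc i := by
  rw [← Finset.sum_sdiff_le_sum_sdiff]
  have hc : (F \ G).card = (G \ F).card := by
    rw [Finset.card_sdiff, Finset.card_sdiff, Finset.inter_comm, hcard]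
  rcases (F \ G).eq_empty_or_nonempty with h | h
  · rw [h] at hc
    have : G \ F = ∅ := by rw [← Finset.card_eq_zero, ← hc]; simp
    rw [h, this]
  · obtain ⟨v, hv, hmax⟩ := Finset.exists_max_image (F \ G) cc h
    calc ∑ i ∈ F \ G, cc i ≤ (F \ G).card • cc v := Finset.sum_le_card_nsmul _ _ _ hmax
      _ = (G \ F).card • cc v := by rw [hc]
      _ ≤ _ := by
        apply Finset.card_nsmul_le_sum
        intro u hu
        apply hcc
        rw [Finset.mem_sdiff] at hu hv
        by_contra hlt
        exact hv.2 (hG u hu.1 v (not_le.1 hlt).le)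

lemma Tab.col_bound {n : ℕ} {lam : Fin n → ℕ} (T : Tab lam) (ha : Antitone lam)
    (f : Fin n → Fin n) (hf : ∀ x y, T.c x = T.c y → f x = f y → x = y) 
    (cc : Fin n → ℤ) (hcc : Antitone cc) : ∑ x, cc (f x) ≤ ∑ x, cc (T.r x) := by
  rw [← Finset.sum_fiberwise_of_maps_to (t := Finset.univ) (g := T.c) (by simp) (fun x => cc (f x)),
    ← Finset.sum_fiberwise_of_maps_to (t := Finset.univ) (g := T.c) (by simp) (fun x => cc (T.r x))]
  refine Finset.sum_le_sum fun j _ => ?_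
  have i1 : Set.InjOn f (Finset.univ.filter (fun x => T.c x = j) : Finset (Fin n)) := by
    intro x hx y hy h
    simp at hx hy
    exact hf x y (hx.trans hy.symm) h
  have i2 : Set.InjOn T.r (Finset.univ.filter (fun x => T.c x = j) : Finset (Fin n)) := by
    intro x hx y hy h
    simp at hx hy
    exact T.inj x y h (hx.trans hy.symm)
  rw [← Finset.sum_image (f := cc) (g := f) i1, ← Finset.sum_image (f := cc) (g := T.r) i2]
  refine lower_sum _ _ ?_ ?_ cc hcc
  · rw [Finset.card_image_of_injOn i1, Finset.card_image_of_injOn i2]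
  · intro i hi i' hi'
    simp only [Finset.mem_image, Finset.mem_filter, Finset.mem_univ, true_and] at hi ⊢
    obtain ⟨x, hx, rfl⟩ := hi
    obtain ⟨y, h1, h2⟩ := T.surj i' j (by rw [← hx]; exact (T.mem x).trans_le (ha hi'))
    exact ⟨y, h2, h1⟩

lemma Tab.dom {n : ℕ} {lam : Fin n → ℕ} (T : Tab lam) (ha : Antitone lam) (hs : ∑ i, lam i = n)
    (f : Fin n → Fin n) (hf : ∀ x y, T.c x = T.c y → f x = f y → x = y) 
    (w : Perm (Fin n)) (l : Fin n → ℕ) (hl : ∀ i, cont f i + (n - 1 - (w i : ℕ)) = l i)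
    (cc : Fin n → ℤ) (hcc : Antitone cc) :
    ∑ i, (l i : ℤ) * cc i ≤ ∑ i, ((lam i + (n - 1 - (i : ℕ)) : ℕ) : ℤ) * cc i := by
  have h1 := T.col_bound ha f hf cc hcc
  rw [sum_cont, sum_cont] at h1
  simp only [T.cont_r hs] at h1
  have h2 : ∑ i, ((n - 1 - (w i : ℕ) : ℕ) : ℤ) * cc i ≤ ∑ i : Fin n, ((n - 1 - (i : ℕ) : ℕ) : ℤ) * cc i := by
    have hm : Monovary (fun i : Fin n => ((n - 1 - (i : ℕ) : ℕ) : ℤ)) cc := by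
      have : Antitone (fun i : Fin n => ((n - 1 - (i : ℕ) : ℕ) : ℤ)) := by
        intro i j hij
        have : (i : ℕ) ≤ j := hij
        simp only
        omega
      exact this.monovary hcc
    exact hm.sum_comp_perm_mul_le_sum_mul (σ := w)
  calc ∑ i, (l i : ℤ) * cc i = ∑ i, (cont f i : ℤ) * cc i + ∑ i, ((n - 1 - (w i : ℕ) : ℕ) : ℤ) * cc i := by
        rw [← Finset.sum_add_distrib]
        refine Finset.sum_congr rfl fun i _ => ?_
        rw [← hl i]; push_cast; ring
    _ ≤ ∑ i, (lam i : ℤ) * cc i + ∑ i : Fin n, ((n - 1 - (i : ℕ) : ℕ) : ℤ) * cc i := add_le_add h1 h2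
    _ = _ := by
        rw [← Finset.sum_add_distrib]
        refine Finset.sum_congr rfl fun i _ => ?_
        push_cast; ring
end CB

open Equiv
namespace CB

/-- shifted partition -/
def sh {n : ℕ} (lam : Fin n → ℕ) (i : Fin n) : ℕ := lam i + (n - 1 - (i : ℕ))

lemma sh_anti {n : ℕ} (lam : Fin n → ℕ) (ha : Antitone lam) : Antitone (fun i => (sh lam i : ℤ)) := by
  intro i j hij
  have h1 := ha hij
  have : (i : ℕ) ≤ j := hij
  simp only [sh]
  omega

lemma sh_lt {n : ℕ} (lam : Fin n → ℕ) (h : ∀ i, lam i ≤ n) (i) : sh lam i < 2 * n := by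
  have := h i
  simp only [sh]; omega

lemma sh_inj {n : ℕ} (lam : Fin n → ℕ) (ha : Antitone lam) {i j} (h : sh lam i = sh lam j) : i = j := by
  simp only [sh] at h
  rcases lt_trichotomy i j with hij | hij | hij
  · have h1 := ha hij.le
    have : (i : ℕ) < j := hij
    omega
  · exact hij
  · have h1 := ha hij.le
    have : (j : ℕ) < i := hij
    omega

lemma exists_sigma {n : ℕ} (mu : Fin n → ℕ) (ha : Antitone mu) (hs : ∑ i, mu i = n) :
    ∃ σ : Perm (Fin n ⊕ Fin n), (∀ i, vl (σ (Sum.inl i)) = sh mu i) ∧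
      ∀ j, vl (σ (Sum.inr j)).swap = sh (conj mu) j := by
  have hle := le_of_sum mu hs
  have hle' := conj_le mu
  choose z hz using fun i => vl_surj (n := n) (sh mu i) (sh_lt mu hle i)
  choose y hy using fun i => vl_surj (n := n) (sh (conj mu) i) (sh_lt (conj mu) hle' i)
  let F : Fin n ⊕ Fin n → Fin n ⊕ Fin n := Sum.elim z (fun j => (y j).swap)
  have hdis : ∀ i j, vl (z i) ≠ vl (y j).swap := by
    intro i j h
    have h1 := vl_swap (y j)
    rw [hy] at h1
    rw [hz] at h
    have h2 := conj_iff mu ha i j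
    simp only [sh] at h h1
    have := i.2
    have := j.2
    by_cases h3 : (j : ℕ) < mu i
    · have := h2.2 h3
      omega
    · have : ¬ (i : ℕ) < conj mu j := fun e => h3 (h2.1 e)
      omega
  have hF : Function.Injective F := by
    rintro (i | i) (j | j) h
    · simp only [F, Sum.elim_inl] at h
      have : sh mu i = sh mu j := by rw [← hz, ← hz, h]
      rw [sh_inj mu ha this]
    · simp only [F, Sum.elim_inl, Sum.elim_inr] at h
      exact (hdis i j (by rw [h])).elim
    · simp only [F, Sum.elim_inl, Sum.elim_inr] at h
      exact (hdis j i (by rw [h])).elim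
    · simp only [F, Sum.elim_inr] at h
      have h := congrArg Sum.swap h
      simp only [Sum.swap_swap] at h
      have : sh (conj mu) i = sh (conj mu) j := by rw [← hy, ← hy, h]
      rw [sh_inj _ (conj_anti mu) this]
  refine ⟨Equiv.ofBijective F (Finite.injective_iff_bijective.1 hF), ?_, ?_⟩
  · intro i; simp [F, hz]
  · intro j; simp [F, hy]

lemma quad_sum {n : ℕ} (mu : Fin n → ℕ) (ha : Antitone mu) (hs : ∑ i, mu i = n) :
    ∑ i, (sh mu i : ℤ) ^ 2 + ∑ i, (sh (conj mu) i : ℤ) ^ 2 =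
      ∑ z : Fin n ⊕ Fin n, (vl z : ℤ) ^ 2 - n * (2 * n - 1) ^ 2 + 
        2 * (2 * n - 1) * (n + ∑ i : Fin n, ((n - 1 - (i:ℕ) : ℕ) : ℤ)) := by
  obtain ⟨σ, h1, h2⟩ := exists_sigma mu ha hs
  have e1 : ∑ z : Fin n ⊕ Fin n, (vl z : ℤ) ^ 2 = ∑ z : Fin n ⊕ Fin n, (vl (σ z) : ℤ) ^ 2 :=
    (Equiv.sum_comp σ (fun z => (vl z : ℤ) ^ 2)).symm
  rw [e1, Fintype.sum_sum_type]
  have e2 : ∀ j, (vl (σ (Sum.inr j)) : ℤ) ^ 2 = (2 * n - 1) ^ 2 - 2 * (2 * n - 1) * sh (conj mu) j +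
      (sh (conj mu) j) ^ 2 := by
    intro j
    have := vl_swap (σ (Sum.inr j))
    rw [h2] at this
    have : (vl (σ (Sum.inr j)) : ℤ) = 2 * n - 1 - sh (conj mu) j := by omega
    rw [this]; ring
  simp only [h1, e2]
  rw [Finset.sum_add_distrib, Finset.sum_sub_distrib, ← Finset.mul_sum]
  have e3 : ∑ j, (sh (conj mu) j : ℤ) = n + ∑ i : Fin n, ((n - 1 - (i:ℕ) : ℕ) : ℤ) := by
    have := conj_sum mu (le_of_sum mu hs)
    rw [hs] at this
    simp only [sh]
    push_cast
    rw [Finset.sum_add_distrib]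
    congr 1
    exact_mod_cast this
  rw [e3]
  simp
  ring

lemma neg_one_pow_full {n : ℕ} (g : Perm (Fin n)) :
    ((-1 : ℤ)) ^ (Multiset.card (fullCycleType g)) = (-1) ^ n * Perm.sign g := by
  rw [Perm.sign_of_cycleType, fullCycleType]
  simp only [Multiset.card_add, Multiset.card_replicate]
  push_cast
  have : g.cycleType.sum ≤ n := by
    rw [Perm.sum_cycleType]; exact (Finset.card_le_univ _).trans (by simp)
  rw [← pow_add]
  have : n + (g.cycleType.sum + Multiset.card g.cycleType) =
     (Multiset.card g.cycleType + (n - g.cycleType.sum)) + 2 * g.cycleType.sum := by omega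
  rw [this, pow_add _ _ (2 * _), pow_mul]
  simp

lemma full_pos {n : ℕ} (g : Perm (Fin n)) : ∀ k ∈ fullCycleType g, 0 < k := by
  intro k hk
  rw [fullCycleType, Multiset.mem_add] at hk
  rcases hk with hk | hk
  · have := Perm.two_le_of_mem_cycleType hk; omega
  · rw [Multiset.eq_of_mem_replicate hk]; norm_num

lemma full_conj {n : ℕ} (g h : Perm (Fin n)) (hc : g.cycleType = h.cycleType) :
    fullCycleType g = fullCycleType h := by rw [fullCycleType, hc, fullCycleType]

lemma frob_compl {n : ℕ} (mu : Fin n → ℕ) (ha : Antitone mu) (hs : ∑ i, mu i = n) :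
    ∃ s : ℤ, ∀ g : Perm (Fin n), frobChar n mu (fullCycleType g) =
      s * (Perm.sign g * aco n (sh (conj mu)) (fullCycleType g)) := by
  obtain ⟨σ, h1, h2⟩ := exists_sigma mu ha hs
  refine ⟨Perm.sign σ * (-1) ^ n, fun g => ?_⟩
  have := aco_compl (fullCycleType g) (full_pos g) σ
  simp only [h1, h2] at this
  rw [neg_one_pow_full] at this
  rw [frob_eq_aco]
  refine this.trans ?_
  ring_nf

lemma sq_le_aux {n : ℕ} (a b : Fin n → ℤ) (h : ∑ i, a i * a i ≤ ∑ i, b i * a i) :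
    ∑ i, (b i - a i) ^ 2 ≤ ∑ i, b i ^ 2 - ∑ i, a i ^ 2 := by
  have : ∑ i, (b i - a i) ^ 2 = ∑ i, b i ^ 2 - 2 * ∑ i, b i * a i + ∑ i, a i * a i := by
    rw [Finset.mul_sum, ← Finset.sum_sub_distrib, ← Finset.sum_add_distrib]
    refine Finset.sum_congr rfl fun i _ => ?_
    ring
  rw [this]
  have e : ∑ i, a i ^ 2 = ∑ i, a i * a i := Finset.sum_congr rfl fun i _ => sq _
  rw [e]
  linarith

lemma lem2d {n : ℕ} (lam mu : Fin n → ℕ) (ha : Antitone lam) (hs : ∑ i, lam i = n)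
    (ha' : Antitone mu) (hs' : ∑ i, mu i = n) (T : Tab lam)
    (h : ∑ p : Perm (Fin n), ∑ q : Perm (Fin n),
      ee T.r T.c p q * frobChar n mu (fullCycleType (p * q)) ≠ 0) : lam = mu := by
  obtain ⟨f, w, hf, hw⟩ := lem2b T.r T.c (sh mu) h
  have d1 := T.dom ha hs f hf w (sh mu) hw _ (sh_anti mu ha')
  have h' : ∑ p : Perm (Fin n), ∑ q : Perm (Fin n),
      ee T.c T.r p q * aco n (sh (conj mu)) (fullCycleType (p * q)) ≠ 0 := by
    intro h0
    apply h
    obtain ⟨s, hs⟩ := frob_compl mu ha' hs'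
    simp only [hs]
    have : ∑ p : Perm (Fin n), ∑ q : Perm (Fin n),
      ee T.r T.c p q * (s * (Perm.sign (p * q) * aco n (sh (conj mu)) (fullCycleType (p * q)))) = 
      s * ∑ p : Perm (Fin n), ∑ q : Perm (Fin n),
      ee T.c T.r p q * aco n (sh (conj mu)) (fullCycleType (p * q)) := by
      rw [Finset.sum_comm, Finset.mul_sum]
      refine Fintype.sum_equiv (Equiv.inv _) _ _ fun q => ?_
      rw [Finset.mul_sum]
      refine Fintype.sum_equiv (Equiv.inv _) _ _ fun p => ?_
      simp only [Equiv.inv_apply]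
      rw [← mul_inv_rev, full_conj _ _ (Perm.cycleType_inv (p * q))]
      have : ee T.r T.c p q * Perm.sign (p * q) = ee T.c T.r q⁻¹ p⁻¹ := by
        unfold ee
        have hinv : ∀ (u : Fin n → Fin n) (p : Perm (Fin n)),
          (∀ x, u (p x) = u x) ↔ ∀ x, u (p⁻¹ x) = u x := by
          intro u p
          constructor
          · intro h x
            have := h (p⁻¹ x)
            simpa using this.symm
          · intro h x
            have := h (p x)
            simpa using this.symm
        have hiff : ((∀ x, T.r (p x) = T.r x) ∧ (∀ x, T.c (q x) = T.c x)) ↔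
            ((∀ x, T.c (q⁻¹ x) = T.c x) ∧ (∀ x, T.r (p⁻¹ x) = T.r x)) := by
          rw [← hinv T.r p, ← hinv T.c q, and_comm]
        simp only [hiff]
        split_ifs
        · rw [Perm.sign_mul, Perm.sign_inv]
          push_cast
          have : ((Perm.sign q : ℤˣ) : ℤ) * (Perm.sign q : ℤˣ) = 1 := by
            rw [← Units.val_mul, Int.units_mul_self]; rfl
          linear_combination (Perm.sign p : ℤ) * this
        · simp
      rw [← this]
      ring
    rw [this, h0, mul_zero]
  obtain ⟨f', w', hf', hw'⟩ := lem2b T.c T.r (sh (conj mu)) h'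
  have hsc : ∑ j, conj lam j = n := (conj_sum lam (le_of_sum lam hs)).trans hs
  have d2 := (T.swap ha).dom (conj_anti lam) hsc f' hf' w' (sh (conj mu)) hw' _
    (sh_anti _ (conj_anti mu))
  have s1 := sq_le_aux (fun i => (sh mu i : ℤ)) (fun i => (sh lam i : ℤ)) d1
  have s2 := sq_le_aux (fun i => (sh (conj mu) i : ℤ)) (fun i => (sh (conj lam) i : ℤ)) d2
  have q1 := quad_sum lam ha hs
  have q2 := quad_sum mu ha' hs'
  have p2 : 0 ≤ ∑ i, ((sh (conj lam) i : ℤ) - sh (conj mu) i) ^ 2 :=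
    Finset.sum_nonneg fun i _ => sq_nonneg _
  have p1 : ∑ i, ((sh lam i : ℤ) - sh mu i) ^ 2 ≤ 0 := by linarith
  have p3 : ∑ i, ((sh lam i : ℤ) - sh mu i) ^ 2 = 0 :=
    le_antisymm p1 (Finset.sum_nonneg fun i _ => sq_nonneg _)
  rw [Finset.sum_eq_zero_iff_of_nonneg (fun i _ => sq_nonneg _)] at p3
  funext i
  have := p3 i (Finset.mem_univ i)
  have := pow_eq_zero_iff (two_ne_zero) |>.1 this
  simp only [sh] at this
  omega

end CB

open Equiv
namespace CB

def psi {n : ℕ} (r c : Fin n → Fin n) (π : Perm (Fin n)) : ℤ :=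
  ∑ g : Perm (Fin n), ∑ p : Perm (Fin n), ∑ q : Perm (Fin n),
    if p * q = g * π * g⁻¹ then ee r c p q else 0

lemma psi_conj {n : ℕ} (r c : Fin n → Fin n) (π h : Perm (Fin n)) :
    psi r c (h * π * h⁻¹) = psi r c π := by
  unfold psi
  refine Fintype.sum_equiv (Equiv.mulRight h) _ _ fun g => ?_
  simp only [Equiv.coe_mulRight, mul_inv_rev, mul_assoc]

lemma psi_cls {n : ℕ} (r c : Fin n → Fin n) (π π' : Perm (Fin n)) (h : π.cycleType = π'.cycleType) :
    psi r c π = psi r c π' := by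
  obtain ⟨e, he⟩ := isConj_iff.1 (Perm.isConj_iff_cycleType_eq.2 h)
  rw [← he, psi_conj]

lemma psi_pair {n : ℕ} (r c : Fin n → Fin n) (u : Perm (Fin n) → ℤ) 
    (hu : ∀ π π' : Perm (Fin n), π.cycleType = π'.cycleType → u π = u π') :
    ∑ π, psi r c π * u π = (n.factorial : ℤ) * ∑ p, ∑ q, ee r c p q * u (p * q) := by
  have h1 : ∀ g : Perm (Fin n), ∑ π, (∑ p : Perm (Fin n), ∑ q : Perm (Fin n),
    (if p * q = g * π * g⁻¹ then ee r c p q else 0)) * u π = ∑ p, ∑ q, ee r c p q * u (p * q) := by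
    intro g
    simp only [Finset.sum_mul]
    rw [Finset.sum_comm]
    refine Finset.sum_congr rfl fun p _ => ?_
    rw [Finset.sum_comm]
    refine Finset.sum_congr rfl fun q _ => ?_
    rw [Finset.sum_eq_single (g⁻¹ * (p * q) * g)]
    · rw [if_pos (by group)]
      congr 1
      apply hu
      have := Perm.cycleType_conj (σ := p * q) (τ := g⁻¹)
      simpa using this
    · intro π _ hne
      rw [if_neg, zero_mul]
      intro e
      apply hne
      rw [e]; group
    · simp
  unfold psi
  simp only [Finset.sum_mul] at h1 ⊢
  rw [Finset.sum_comm]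
  simp only [h1, Finset.sum_const, Finset.card_univ, Fintype.card_perm, Fintype.card_fin, nsmul_eq_mul]

lemma psi_one {n : ℕ} {lam : Fin n → ℕ} (T : Tab lam) : psi T.r T.c 1 = n.factorial := by
  unfold psi
  have : ∀ p q : Perm (Fin n), (if p * q = 1 then ee T.r T.c p q else 0) = 
      if p = 1 then (if q = 1 then 1 else 0) else 0 := by
    intro p q
    by_cases hpq : p * q = 1
    · rw [if_pos hpq]
      have hq : q = p⁻¹ := eq_inv_of_mul_eq_one_right hpq
      by_cases hp : p = 1
      · subst hp
        simp at hq
        subst hq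
        simp [ee]
      · rw [if_neg hp]
        unfold ee
        rw [if_neg]
        rintro ⟨h1, h2⟩
        apply hp
        ext x
        rw [T.inj (p x) x (h1 x) _]
        · rfl
        · have := h2 (p x)
          rw [hq] at this
          simpa using this.symm
    · rw [if_neg hpq]
      by_cases hp : p = 1
      · have : q ≠ 1 := by rintro rfl; simp [hp] at hpq
        simp [this]
      · simp [hp]
  simp only [mul_one, mul_inv_cancel, this]
  simp [Fintype.card_perm]

lemma shape_eq {n : ℕ} {lam mu : Fin n → ℕ} (ha : Antitone lam) (hs : ∑ i, lam i = n)
    (ha' : Antitone mu) (hs' : ∑ i, mu i = n) (T : Tab lam) (S : Tab mu) (g : Perm (Fin n))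
    (h1 : ∀ x y, T.c x = T.c y → S.r (g x) = S.r (g y) → x = y)
    (h2 : ∀ x y, S.c x = S.c y → T.r (g⁻¹ x) = T.r (g⁻¹ y) → x = y) : lam = mu := by
  have c1 : Antitone (fun i => (lam i : ℤ)) := fun i j h => Int.ofNat_le.2 (ha h)
  have c2 : Antitone (fun i => (mu i : ℤ)) := fun i j h => Int.ofNat_le.2 (ha' h)
  have b1 := T.col_bound ha (fun x => S.r (g x)) h1 _ c2
  have b2 := S.col_bound ha' (fun x => T.r (g⁻¹ x)) h2 _ c1
  rw [Equiv.sum_comp g (fun x => (mu (S.r x) : ℤ)), sum_cont S.r (fun i => (mu i : ℤ)),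
    sum_cont T.r (fun i => (mu i : ℤ))] at b1
  rw [Equiv.sum_comp g⁻¹ (fun x => (lam (T.r x) : ℤ)), sum_cont S.r (fun i => (lam i : ℤ)), 
    sum_cont T.r (fun i => (lam i : ℤ))] at b2
  simp only [T.cont_r hs, S.cont_r hs'] at b1 b2
  have e := sq_le_aux _ _ b1
  have e2 : ∑ i, (lam i : ℤ) ^ 2 ≤ ∑ i, (mu i : ℤ) * lam i := by
    refine le_trans (le_of_eq ?_) b2
    exact Finset.sum_congr rfl fun i _ => sq _
  have e3 : ∑ i, (mu i : ℤ) * lam i = ∑ i, (lam i : ℤ) * mu i := 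
    Finset.sum_congr rfl fun i _ => mul_comm _ _
  have e' := sq_le_aux _ _ b2
  have e4 : ∑ i, ((lam i : ℤ) - mu i) ^ 2 = ∑ i, ((mu i : ℤ) - lam i) ^ 2 :=
    Finset.sum_congr rfl fun i _ => by ring
  have p3 : ∑ i, ((lam i : ℤ) - mu i) ^ 2 = 0 :=
    le_antisymm (by linarith) (Finset.sum_nonneg fun i _ => sq_nonneg _)
  rw [Finset.sum_eq_zero_iff_of_nonneg (fun i _ => sq_nonneg _)] at p3
  funext i
  have := pow_eq_zero_iff (two_ne_zero) |>.1 (p3 i (Finset.mem_univ i))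
  omega

lemma psi_inv {n : ℕ} (r c : Fin n → Fin n) (π : Perm (Fin n)) : psi r c π⁻¹ = psi r c π :=
  psi_cls r c _ _ (Perm.cycleType_inv π)

lemma conj_swap {n : ℕ} (g : Perm (Fin n)) (x y : Fin n) :
    g * swap x y * g⁻¹ = swap (g x) (g y) := by
  rw [Equiv.mul_swap_eq_swap_mul]; simp

lemma lem2e {n : ℕ} {lam mu : Fin n → ℕ} (ha : Antitone lam) (hs : ∑ i, lam i = n)
    (ha' : Antitone mu) (hs' : ∑ i, mu i = n) (T : Tab lam) (S : Tab mu) (hne : lam ≠ mu) :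
    ∑ p, ∑ q, ee T.r T.c p q * psi S.r S.c (p * q) = 0 := by
  have key : ∀ g : Perm (Fin n), ∑ p : Perm (Fin n), ∑ q : Perm (Fin n), ∑ p' : Perm (Fin n),
      ∑ q' : Perm (Fin n), ee T.r T.c p q *
        (if p' * q' = g * (p * q)⁻¹ * g⁻¹ then ee S.r S.c p' q' else 0) = 0 := by
    intro g
    by_cases h1 : ∀ x y, T.c x = T.c y → S.r (g x) = S.r (g y) → x = y
    · by_cases h2 : ∀ x y, S.c x = S.c y → T.r (g⁻¹ x) = T.r (g⁻¹ y) → x = y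
      · exact (hne (shape_eq ha hs ha' hs' T S g h1 h2)).elim
      · push Not at h2
        obtain ⟨x, y, hc, hr, hxy⟩ := h2
        have hcs := conj_swap g⁻¹ x y
        rw [inv_inv] at hcs
        rw [← self_eq_neg (G := ℤ)]
        simp only [← Finset.sum_neg_distrib]
        refine Fintype.sum_equiv (Equiv.mulLeft (swap (g⁻¹ x) (g⁻¹ y))) _ _ fun p => ?_
        refine Finset.sum_congr rfl fun q _ => ?_
        refine Finset.sum_congr rfl fun p' _ => ?_
        refine Fintype.sum_equiv (Equiv.mulRight (swap x y)) _ _ fun q' => ?_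
        rw [Equiv.coe_mulLeft, Equiv.coe_mulRight, ee_swap_mul _ _ _ _ _ _ hr,
          ee_mul_swap _ _ _ _ _ _ hxy hc]
        have : p' * q' = g * (p * q)⁻¹ * g⁻¹ ↔
          p' * (q' * swap x y) = g * (swap (g⁻¹ x) (g⁻¹ y) * p * q)⁻¹ * g⁻¹ := by
          rw [← hcs]
          have : g * (g⁻¹ * swap x y * g * p * q)⁻¹ * g⁻¹ = (g * (p * q)⁻¹ * g⁻¹) * swap x y := by
            have : (swap x y)⁻¹ = swap x y := Equiv.swap_inv x y
            simp only [mul_inv_rev, inv_inv, this]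
            group
          rw [this, ← mul_assoc, mul_left_inj]
        simp only [this]
        split_ifs <;> simp
    · push Not at h1
      obtain ⟨x, y, hc, hr, hxy⟩ := h1
      have hcs := conj_swap g x y
      rw [← self_eq_neg (G := ℤ)]
      simp only [← Finset.sum_neg_distrib]
      refine Finset.sum_congr rfl fun p _ => ?_
      refine Fintype.sum_equiv (Equiv.mulRight (swap x y)) _ _ fun q => ?_
      refine Fintype.sum_equiv (Equiv.mulLeft (swap (g x) (g y))) _ _ fun p' => ?_
      refine Finset.sum_congr rfl fun q' _ => ?_
      rw [Equiv.coe_mulLeft, Equiv.coe_mulRight, ee_swap_mul _ _ _ _ _ _ hr,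
          ee_mul_swap _ _ _ _ _ _ hxy hc]
      have : p' * q' = g * (p * q)⁻¹ * g⁻¹ ↔
          swap (g x) (g y) * p' * q' = g * (p * (q * swap x y))⁻¹ * g⁻¹ := by
        rw [← hcs]
        have : g * (p * (q * swap x y))⁻¹ * g⁻¹ = (g * swap x y * g⁻¹) * (g * (p * q)⁻¹ * g⁻¹) := by
          have : (swap x y)⁻¹ = swap x y := Equiv.swap_inv x y
          simp only [mul_inv_rev, this]
          group
        rw [this, mul_assoc (g * swap x y * g⁻¹), mul_right_inj]
      simp only [this]
      split_ifs <;> simp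
  have h2 : ∀ p q : Perm (Fin n), ee T.r T.c p q * psi S.r S.c (p * q) =
      ∑ g : Perm (Fin n), ∑ p' : Perm (Fin n),
      ∑ q' : Perm (Fin n), ee T.r T.c p q *
        (if p' * q' = g * (p * q)⁻¹ * g⁻¹ then ee S.r S.c p' q' else 0) := by
    intro p q
    rw [← psi_inv]
    unfold psi
    simp only [Finset.mul_sum]
  simp only [h2]
  have h3 : ∀ p : Perm (Fin n), ∑ q : Perm (Fin n), ∑ g : Perm (Fin n), ∑ p' : Perm (Fin n),
      ∑ q' : Perm (Fin n), ee T.r T.c p q *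
        (if p' * q' = g * (p * q)⁻¹ * g⁻¹ then ee S.r S.c p' q' else 0) =
      ∑ g : Perm (Fin n), ∑ q : Perm (Fin n), ∑ p' : Perm (Fin n),
      ∑ q' : Perm (Fin n), ee T.r T.c p q *
        (if p' * q' = g * (p * q)⁻¹ * g⁻¹ then ee S.r S.c p' q' else 0) := fun p => Finset.sum_comm
  simp only [h3]
  rw [Finset.sum_comm]
  exact Finset.sum_eq_zero fun g _ => key g
end CB

open Equiv
namespace CB

/-- partitions of `n` as antitone functions -/
abbrev Lam (n : ℕ) := {lam : Fin n → ℕ // Antitone lam ∧ ∑ i, lam i = n}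

instance (n : ℕ) : Finite (Lam n) := by
  apply Finite.of_injective (fun (l : Lam n) (i : Fin n) => (⟨l.1 i, Nat.lt_succ_of_le (le_of_sum l.1 l.2.2 i)⟩ : Fin (n+1)))
  intro l l' h
  apply Subtype.ext
  funext i
  have := congrFun h i
  simpa using this

lemma countP_sum {n : ℕ} (s : Multiset ℕ) (hs : ∀ k ∈ s, k ≤ n) :
    ∑ j : Fin n, s.countP (fun k => (j : ℕ) < k) = s.sum := by
  induction s using Multiset.induction with
  | empty => simp
  | cons a s ih =>
    simp only [Multiset.countP_cons, Multiset.sum_cons]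
    rw [Finset.sum_add_distrib, ih (fun k hk => hs k (by simp [hk])), ← Finset.card_filter]
    have := @Fin.card_filter_val_lt n a
    rw [this, min_eq_right (hs a (by simp)), add_comm]

lemma countP_succ (s : Multiset ℕ) (a : ℕ) :
    s.countP (fun k => a < k) = s.countP (fun k => a + 1 < k) + s.count (a + 1) := by
  induction s using Multiset.induction with
  | empty => simp
  | cons b s ih =>
    simp only [Multiset.countP_cons, Multiset.count_cons, ih]
    split_ifs <;> omega

lemma countP_inj {n : ℕ} (s s' : Multiset ℕ) (hs : ∀ k ∈ s, 0 < k ∧ k ≤ n) (hs' : ∀ k ∈ s', 0 < k ∧ k ≤ n)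
    (h : ∀ j : Fin n, s.countP (fun k => (j : ℕ) < k) = s'.countP (fun k => (j : ℕ) < k)) : s = s' := by
  have hall : ∀ j, s.countP (fun k => j < k) = s'.countP (fun k => j < k) := by
    intro j
    by_cases hj : j < n
    · exact h ⟨j, hj⟩
    · rw [Multiset.countP_eq_zero.2, Multiset.countP_eq_zero.2]
      · intro k hk; have := hs' k hk; omega
      · intro k hk; have := hs k hk; omega
  ext a
  rcases a with _ | a
  · rw [Multiset.count_eq_zero.2, Multiset.count_eq_zero.2]
    · intro h0; have := hs' 0 h0; omega
    · intro h0; have := hs 0 h0; omega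
  · have h1 := countP_succ s a
    have h2 := countP_succ s' a
    have h3 := hall a
    have h4 := hall (a+1)
    omega

lemma full_sum {n : ℕ} (g : Perm (Fin n)) : (fullCycleType g).sum = n := by
  have : g.cycleType.sum ≤ n := by
    rw [Perm.sum_cycleType]; exact (Finset.card_le_univ _).trans (by simp)
  simp [fullCycleType]
  omega

lemma full_le {n : ℕ} (g : Perm (Fin n)) : ∀ k ∈ fullCycleType g, k ≤ n := by
  intro k hk
  have := Multiset.single_le_sum (fun _ _ => Nat.zero_le _) k hk
  rwa [full_sum] at this

lemma full_inj {n : ℕ} (g h : Perm (Fin n)) (hh : fullCycleType g = fullCycleType h) :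
    g.cycleType = h.cycleType := by
  have : ∀ g : Perm (Fin n), (fullCycleType g).filter (fun k => 2 ≤ k) = g.cycleType := by
    intro g
    rw [fullCycleType, Multiset.filter_add, Multiset.filter_eq_self.2, Multiset.filter_eq_nil.2, add_zero]
    · intro k hk; rw [Multiset.eq_of_mem_replicate hk]; norm_num
    · intro k hk; exact Perm.two_le_of_mem_cycleType hk
  rw [← this g, hh, this]

/-- conjugacy classes -/
abbrev Cls (n : ℕ) := Set.range (fun g : Perm (Fin n) => g.cycleType)

lemma card_cls (n : ℕ) : Nat.card (Cls n) ≤ Nat.card (Lam n) := by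
  let F : Cls n → Lam n := fun x => ⟨fun j => (fullCycleType x.2.choose).countP (fun k => (j : ℕ) < k), by
    intro i j hij
    simp only [Multiset.countP_eq_card_filter]
    apply Multiset.card_le_card
    apply Multiset.monotone_filter_right
    intro k hk
    exact lt_of_le_of_lt (by exact_mod_cast hij) hk, by
      rw [countP_sum _ (full_le _), full_sum]⟩
  apply Nat.card_le_card_of_injective F
  intro x y h
  have h1 := Subtype.ext_iff.1 h
  have h2 := countP_inj _ _ (fun k hk => ⟨full_pos _ k hk, full_le _ k hk⟩)
    (fun k hk => ⟨full_pos _ k hk, full_le _ k hk⟩) (congrFun h1)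
  have h3 := full_inj _ _ h2
  apply Subtype.ext
  rw [← x.2.choose_spec, ← y.2.choose_spec]
  exact h3

lemma frob_prop {n : ℕ} (mu : Fin n → ℕ) (ha : Antitone mu) (hs : ∑ i, mu i = n) :
    ∃ T : Tab mu, ∃ c : ℝ, ∀ π : Perm (Fin n),
      (frobChar n mu (fullCycleType π) : ℝ) = c * psi T.r T.c π := by
  classical
  have := Fintype.ofFinite (Lam n)
  let Tb : ∀ l : Lam n, Tab l.1 := fun l => (exists_tab l.1 l.2.2).some
  let m : Lam n := ⟨mu, ha, hs⟩
  let ps : Lam n → Perm (Fin n) → ℤ := fun l => psi (Tb l).r (Tb l).c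
  have hcls : ∀ l π π', π.cycleType = π'.cycleType → ps l π = ps l π' := fun l π π' h => psi_cls _ _ _ _ h
  have orth : ∀ l l' : Lam n, l ≠ l' → ∑ π, ps l π * ps l' π = 0 := by
    intro l l' h
    rw [psi_pair _ _ _ (hcls l')]
    rw [lem2e l.2.1 l.2.2 l'.2.1 l'.2.2 (Tb l) (Tb l') (fun e => h (Subtype.ext e)), mul_zero]
  have pos : ∀ l : Lam n, ∑ π, ps l π * ps l π ≠ 0 := by
    intro l h
    rw [Finset.sum_eq_zero_iff_of_nonneg (fun i _ => mul_self_nonneg _)] at h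
    have := h 1 (Finset.mem_univ _)
    rw [mul_self_eq_zero] at this
    simp only [ps, psi_one] at this
    exact Nat.factorial_ne_zero n (by exact_mod_cast this)
  have orthF : ∀ l : Lam n, l ≠ m → ∑ π, ps l π * frobChar n mu (fullCycleType π) = 0 := by
    intro l h
    rw [psi_pair _ _ (fun π => frobChar n mu (fullCycleType π)) (fun π π' h => by rw [full_conj _ _ h])]
    by_contra h0
    have := lem2d l.1 mu l.2.1 l.2.2 ha hs (Tb l) (fun h => h0 (by rw [h, mul_zero]))
    exact h (Subtype.ext this)
  let cl : Perm (Fin n) → Cls n := fun π => ⟨π.cycleType, π, rfl⟩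
  have hch : ∀ π, (cl π).2.choose.cycleType = π.cycleType := fun π => (cl π).2.choose_spec
  let v : Lam n → (Cls n → ℝ) := fun l x => (ps l x.2.choose : ℝ)
  have hv : ∀ l π, v l (cl π) = ps l π := by
    intro l π
    simp only [v]
    rw [hcls l _ π (hch π)]
  -- pairing
  have expand : ∀ (g : Lam n → ℝ) (F : Perm (Fin n) → ℤ), 
      (∀ π, ∑ l, g l * (ps l π : ℝ) = F π) → ∀ l, g l * (∑ π, ps l π * ps l π : ℤ) = (∑ π, ps l π * F π : ℤ) := by
    intro g F h l
    push_cast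
    simp only [← h, Finset.mul_sum]
    rw [Finset.sum_comm, Finset.sum_eq_single l]
    · refine Finset.sum_congr rfl fun π _ => ?_
      ring
    · intro l' _ hne
      have := orth l l' hne.symm
      have : (∑ π, (ps l π : ℝ) * (ps l' π : ℝ)) = 0 := by exact_mod_cast this
      calc _ = g l' * (∑ π, (ps l π : ℝ) * (ps l' π : ℝ)) := by
            rw [Finset.mul_sum]
            refine Finset.sum_congr rfl fun π _ => ?_
            ring
        _ = 0 := by rw [this, mul_zero]
    · simp
  have hli : LinearIndependent ℝ v := by
    rw [Fintype.linearIndependent_iff]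
    intro g hg l
    have := expand g (fun _ => 0) (by
      intro π
      have := congrFun hg (cl π)
      simp only [Finset.sum_apply, Pi.smul_apply, hv, smul_eq_mul, Pi.zero_apply] at this
      simpa using this) l
    simp only [mul_zero, Finset.sum_const_zero, Int.cast_zero, mul_eq_zero] at this
    rcases this with h | h
    · exact h
    · exact (pos l (by exact_mod_cast h)).elim
  have := Fintype.ofFinite (Cls n)
  have hfr : Module.finrank ℝ (Cls n → ℝ) = Fintype.card (Cls n) := Module.finrank_fintype_fun_eq_card ℝ
  have hcard : Fintype.card (Lam n) = Module.finrank ℝ (Cls n → ℝ) := by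
    apply le_antisymm
    · exact hli.fintype_card_le_finrank
    · rw [hfr, ← Nat.card_eq_fintype_card, ← Nat.card_eq_fintype_card]
      exact card_cls n
  have hspan := hli.span_eq_top_of_card_eq_finrank' hcard
  let Fv : Cls n → ℝ := fun x => (frobChar n mu (fullCycleType x.2.choose) : ℝ)
  have hFv : ∀ π, Fv (cl π) = frobChar n mu (fullCycleType π) := by
    intro π
    simp only [Fv]
    rw [full_conj _ _ (hch π)]
  have hmem : Fv ∈ Submodule.span ℝ (Set.range v) := by rw [hspan]; trivial
  rw [Submodule.mem_span_range_iff_exists_fun] at hmem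
  obtain ⟨g, hg⟩ := hmem
  have hg' : ∀ π, ∑ l, g l * (ps l π : ℝ) = (frobChar n mu (fullCycleType π) : ℤ) := by
    intro π
    have := congrFun hg (cl π)
    simp only [Finset.sum_apply, Pi.smul_apply, hv, smul_eq_mul, hFv] at this
    exact this
  have hz : ∀ l, l ≠ m → g l = 0 := by
    intro l hl
    have := expand g _ hg' l
    rw [orthF l hl, Int.cast_zero, mul_eq_zero] at this
    rcases this with h | h
    · exact h
    · exact (pos l (by exact_mod_cast h)).elim
  refine ⟨Tb m, g m, fun π => ?_⟩
  rw [← hg' π, Finset.sum_eq_single m]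
  · intro l _ hl; rw [hz l hl, zero_mul]
  · simp
end CB

open Equiv
namespace CB

def piS {n : ℕ} (π : Perm (Fin n)) : Perm {x // π x ≠ x} :=
  π.subtypePerm (fun x => by simp)

lemma piS_cyc {n : ℕ} (π : Perm (Fin n)) : (piS π).cycleType = π.cycleType := by
  have h : Perm.ofSubtype (piS π) = π := Perm.ofSubtype_subtypePerm _ (fun x hx => hx)
  conv_rhs => rw [← h]
  rw [Perm.cycleType_ofSubtype]

lemma piS_card {n : ℕ} (π : Perm (Fin n)) : Fintype.card {x // π x ≠ x} = π.cycleType.sum := by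
  rw [Perm.sum_cycleType, Fintype.card_subtype]
  congr 1

abbrev Trip {n : ℕ} (r c : Fin n → Fin n) (π : Perm (Fin n)) :=
  {t : Perm (Fin n) × Perm (Fin n) × Perm (Fin n) // t.2.1 * t.2.2 = t.1 * π * t.1⁻¹ ∧
    (∀ x, r (t.2.1 x) = r x) ∧ (∀ x, c (t.2.2 x) = c x)}

lemma psi_le_trip {n : ℕ} (r c : Fin n → Fin n) (π : Perm (Fin n)) :
    |psi r c π| ≤ (Fintype.card (Trip r c π) : ℤ) := by
  have h1 : |psi r c π| ≤ ∑ g : Perm (Fin n), ∑ p : Perm (Fin n), ∑ q : Perm (Fin n),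
      (if p * q = g * π * g⁻¹ ∧ (∀ x, r (p x) = r x) ∧ (∀ x, c (q x) = c x) then (1:ℤ) else 0) := by
    unfold psi
    refine (Finset.abs_sum_le_sum_abs _ _).trans (Finset.sum_le_sum fun g _ => ?_)
    refine (Finset.abs_sum_le_sum_abs _ _).trans (Finset.sum_le_sum fun p _ => ?_)
    refine (Finset.abs_sum_le_sum_abs _ _).trans (Finset.sum_le_sum fun q _ => ?_)
    unfold ee
    split_ifs with h1 h2 h3 h3
    · rcases Int.units_eq_one_or (Perm.sign q) with h | h <;> simp [h]
    · tauto
    · tauto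
    · simp
    · simp
    · simp
  refine h1.trans (le_of_eq ?_)
  rw [Fintype.card_subtype, Finset.card_filter]
  push_cast
  rw [Fintype.sum_prod_type]
  refine Finset.sum_congr rfl fun g _ => ?_
  rw [Fintype.sum_prod_type]

variable {n : ℕ} {r c : Fin n → Fin n} {π : Perm (Fin n)}

def Trip.s (t : Trip r c π) : Perm (Fin n) := t.1.1⁻¹ * t.1.2.1 * t.1.1

lemma Trip.s_r (t : Trip r c π) (x : Fin n) : r (t.1.1 (t.s x)) = r (t.1.1 x) := by
  have := t.2.2.1 (t.1.1 x)
  rw [← this]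
  simp [Trip.s]

lemma Trip.s_c (t : Trip r c π) (x : Fin n) : c (t.1.1 (t.s⁻¹ (π x))) = c (t.1.1 x) := by
  have h := t.2.2.2 (t.1.1 x)
  rw [← h]
  have e : t.1.1 * (t.s⁻¹ * π) = t.1.2.2 * t.1.1 := by
    have h2 := t.2.1
    have h3 : t.1.2.2 = t.1.2.1⁻¹ * (t.1.1 * π * t.1.1⁻¹) := by rw [← h2]; group
    rw [h3]; unfold Trip.s; group
  have := congrArg (fun f : Perm (Fin n) => f x) e
  simp only [Perm.mul_apply] at this
  rw [this]

lemma Trip.s_fix (inj : ∀ x y, r x = r y → c x = c y → x = y) (t : Trip r c π) (x : Fin n)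
    (hx : π x = x) : t.s x = x := by
  have h1 := t.s_c x
  rw [hx] at h1
  have h2 := t.s_r (t.s⁻¹ x)
  have h0 : t.s (t.s⁻¹ x) = x := by simp
  rw [h0] at h2
  have h3 := t.1.1.injective (inj _ _ h2.symm h1)
  conv_lhs => rw [← h3]
  simp

lemma Trip.s_supp (inj : ∀ x y, r x = r y → c x = c y → x = y) (t : Trip r c π) (x : Fin n) :
    π (t.s x) ≠ t.s x ↔ π x ≠ x := by
  rw [not_iff_not]
  constructor
  · intro h
    have h2 := t.s.injective (t.s_fix inj _ h)
    rwa [h2] at h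
  · intro h
    rw [t.s_fix inj _ h, h]

def Trip.map (inj : ∀ x y, r x = r y → c x = c y → x = y) {R L : ℕ} (hR : ∀ x, (r x : ℕ) < R)
    (hL : ∀ x, (c x : ℕ) < L) (t : Trip r c π) :
    {y : Perm {x // π x ≠ x} × ({x // π x ≠ x} → Fin R) × ({x // π x ≠ x} → Fin L) // Good (piS π) y} :=
  ⟨(t.s.subtypePerm (t.s_supp inj), fun x => ⟨r (t.1.1 x), hR _⟩, fun x => ⟨c (t.1.1 x), hL _⟩), by
    constructor
    · intro i
      ext
      have := congrArg Fin.val (t.s_r i)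
      simpa using this
    · intro i
      ext
      have := congrArg Fin.val (t.s_c i)
      simpa [piS] using this⟩

lemma psi_bound (inj : ∀ x y, r x = r y → c x = c y → x = y) {R L : ℕ} (hR : ∀ x, (r x : ℕ) < R)
    (hL : ∀ x, (c x : ℕ) < L) : |psi r c π| ≤ (((n - π.cycleType.sum).factorial *
      Nat.card {y : Perm {x // π x ≠ x} × ({x // π x ≠ x} → Fin R) × ({x // π x ≠ x} → Fin L) // Good (piS π) y} : ℕ) : ℤ) := by
  classical
  refine (psi_le_trip r c π).trans ?_
  norm_cast
  have hf := Finset.card_le_mul_card_image (f := Trip.map (π := π) inj hR hL) Finset.univ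
    ((n - π.cycleType.sum).factorial) ?_
  · refine hf.trans ?_
    refine Nat.mul_le_mul_left _ ?_
    rw [Nat.card_eq_fintype_card]
    exact Finset.card_le_univ _
  · intro b hb
    obtain ⟨t0, -, rfl⟩ := Finset.mem_image.1 hb
    have key : ∀ t : Trip r c π, t.map inj hR hL = t0.map inj hR hL →
        t.s = t0.s ∧ ∀ x, π x ≠ x → t.1.1 x = t0.1.1 x := by
      intro t ht
      have e := congrArg Subtype.val ht
      simp only [Trip.map, Prod.mk.injEq] at e
      obtain ⟨e1, e2, e3⟩ := e
      constructor
      · ext x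
        by_cases hx : π x = x
        · rw [t.s_fix inj x hx, t0.s_fix inj x hx]
        · have := congrArg (fun f : Perm {x // π x ≠ x} => ((f ⟨x, hx⟩ : {x // π x ≠ x}) : Fin n)) e1
          simp only [Perm.subtypePerm_apply] at this
          rw [this]
      · intro x hx
        have a2 := congrFun e2 ⟨x, hx⟩
        have a3 := congrFun e3 ⟨x, hx⟩
        simp only [Fin.mk.injEq] at a2 a3
        exact inj _ _ (Fin.ext a2) (Fin.ext a3)
    have hcard : (Finset.univ.filter fun f : Perm (Fin n) => ∀ a, ¬ (π a = a) → f a = a).card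
        = (n - π.cycleType.sum).factorial := by
      rw [← Fintype.card_subtype]
      rw [← Fintype.card_congr (Perm.subtypeEquivSubtypePerm (fun a : Fin n => π a = a))]
      rw [Fintype.card_perm]
      congr 1
      rw [← piS_card, Fintype.card_subtype_compl, Fintype.card_fin]
      have : Fintype.card {x // π x = x} ≤ n := by
        have := Fintype.card_subtype_le (fun x => π x = x)
        simpa using this
      omega
    rw [← hcard]
    refine Finset.card_le_card_of_injOn (fun t => t0.1.1⁻¹ * t.1.1) ?_ ?_
    · intro t ht
      have ht' := (key t (by simpa using ht)).2
      simp only [Finset.coe_filter, Finset.mem_univ, true_and, Set.mem_ofPred_eq]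
      intro a ha
      rw [Perm.mul_apply, ht' a ha]
      simp
    · intro t ht t' ht' h
      have k1 := (key t (by simpa using ht)).1
      have k2 := (key t' (by simpa using ht')).1
      have hg : t.1.1 = t'.1.1 := mul_left_cancel h
      have hs : t.s = t'.s := k1.trans k2.symm
      have hp : t.1.2.1 = t'.1.2.1 := by
        have e1 : t.1.2.1 = t.1.1 * t.s * t.1.1⁻¹ := by unfold Trip.s; group
        have e2 : t'.1.2.1 = t'.1.1 * t'.s * t'.1.1⁻¹ := by unfold Trip.s; group
        rw [e1, e2, hg, hs]
      have hq : t.1.2.2 = t'.1.2.2 := by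
        have e1 := t.2.1
        have e2 := t'.2.1
        rw [hg, hp, ← e2] at e1
        exact mul_left_cancel e1
      exact Subtype.ext (Prod.ext hg (Prod.ext hp hq))

end CB

open Equiv
namespace CB

lemma fac_ratio : ∀ K n : ℕ, K ≤ n →
    (n:ℝ) ^ K * ((n - K).factorial : ℝ) ≤ Real.exp 1 ^ K * (n.factorial : ℝ) := by
  intro K
  induction K with
  | zero => intro n _; simp
  | succ K ih =>
    intro n hn
    obtain ⟨m, rfl⟩ : ∃ m, n = m + 1 := ⟨n - 1, by omega⟩
    have hK : K ≤ m := by omega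
    have h1 : ((m:ℝ) + 1) ^ K ≤ Real.exp 1 * (m:ℝ) ^ K := by
      rcases Nat.eq_zero_or_pos m with h0 | h0
      · subst h0
        obtain rfl : K = 0 := by omega
        simp
      · have hm : (0:ℝ) < m := by exact_mod_cast h0
        have e1 : (m:ℝ) + 1 = m * (1 / m + 1) := by field_simp; ring
        have e2 : (1 / (m:ℝ) + 1) ^ K ≤ Real.exp 1 := by
          calc (1 / (m:ℝ) + 1) ^ K ≤ Real.exp (1 / m) ^ K := by
                gcongr; exact Real.add_one_le_exp _
            _ = Real.exp (K * (1 / m)) := by rw [← Real.exp_nat_mul]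
            _ ≤ Real.exp 1 := by
                apply Real.exp_le_exp.2
                rw [mul_one_div, div_le_one hm]
                exact_mod_cast hK
        rw [e1, mul_pow, mul_comm (Real.exp 1)]
        gcongr
    have h2 := ih m hK
    have e3 : m + 1 - (K + 1) = m - K := by omega
    rw [e3, Nat.factorial_succ]
    push_cast
    calc ((m:ℝ) + 1) ^ (K+1) * ((m - K).factorial : ℝ)
        = ((m:ℝ) + 1) * (((m:ℝ) + 1) ^ K * ((m - K).factorial : ℝ)) := by ring
      _ ≤ ((m:ℝ) + 1) * ((Real.exp 1 * (m:ℝ) ^ K) * ((m - K).factorial : ℝ)) := by gcongr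
      _ = ((m:ℝ) + 1) * Real.exp 1 * ((m:ℝ) ^ K * ((m - K).factorial : ℝ)) := by ring
      _ ≤ ((m:ℝ) + 1) * Real.exp 1 * (Real.exp 1 ^ K * (m.factorial : ℝ)) := by gcongr
      _ = _ := by ring

lemma num_bound (C : ℝ) (hC : 1 ≤ C) (n K q m : ℕ) (hn : 0 < n) (hK : K = m + q) (hq : q ≤ m) :
    (Real.exp 1 / n) ^ K * ((C * Real.sqrt n) ^ (K + q) *
      (42 * max 1 ((K : ℝ) / (C * Real.sqrt n))) ^ K) ≤
      (max ((16 * Real.exp 1 ^ 3 * C) ^ 3)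
          ((32 * Real.exp 1 ^ 2 * C) ^ 2 * (m : ℝ) ^ 2 / n) / Real.sqrt n) ^ m := by
  have hn' : (0:ℝ) < n := by exact_mod_cast hn
  set s := Real.sqrt n with hs
  have hs0 : 0 < s := Real.sqrt_pos.2 hn'
  have hss : (n:ℝ) = s ^ 2 := (Real.sq_sqrt hn'.le).symm
  rw [hss]
  set e := Real.exp 1 with he
  have he1 : (2.7182818283:ℝ) < e := Real.exp_one_gt_d9
  have he0 : 0 < e := by linarith
  have hC0 : 0 < C := by linarith
  set Y := max 1 ((K : ℝ) / (C * s)) with hY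
  have hY1 : 1 ≤ Y := le_max_left _ _
  set Z := max 1 ((2 * m : ℝ) / (C * s)) with hZ
  have hYZ : Y ≤ Z := by
    apply max_le_max le_rfl
    gcongr
    have : K ≤ 2 * m := by omega
    exact_mod_cast this
  have h1 : (e / s ^ 2) ^ K * ((C * s) ^ (K + q) * (42 * Y) ^ K)
      = (42 * e * Y) ^ K * C ^ (K + q) * (1 / s) ^ m := by
    have : s ^ (K + q) = (s ^ 2) ^ K * (1 / s) ^ m := by
      rw [← pow_mul, one_div, inv_pow, eq_mul_inv_iff_mul_eq₀ (by positivity), ← pow_add]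
      congr 1; omega
    rw [div_pow, mul_pow C, this, mul_pow, mul_pow, mul_pow]
    field_simp
  rw [h1]
  have h42 : 1 ≤ 42 * e * Y := by nlinarith
  have h2 : (42 * e * Y) ^ K ≤ (42 * e * Z) ^ (2 * m) := by
    calc (42 * e * Y) ^ K ≤ (42 * e * Y) ^ (2 * m) := pow_le_pow_right₀ h42 (by omega)
      _ ≤ _ := by gcongr
  have h3 : C ^ (K + q) ≤ C ^ (3 * m) := pow_le_pow_right₀ hC (by omega)
  have he2 : (7.38:ℝ) ≤ e ^ 2 := by nlinarith
  have h4 : (42 * e * Z) ^ 2 * C ^ 3 ≤ max ((16 * e ^ 3 * C) ^ 3) ((32 * e ^ 2 * C) ^ 2 * (m : ℝ) ^ 2 / s ^ 2) := by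
    rcases max_choice 1 ((2 * m : ℝ) / (C * s)) with h | h
    · rw [hZ, h]
      refine le_trans ?_ (le_max_left _ _)
      have a : (1:ℝ) ≤ e ^ 7 := one_le_pow₀ (by linarith)
      have b : 0 ≤ e ^ 2 * C ^ 3 := by positivity
      have : (16 * e ^ 3 * C) ^ 3 = 4096 * e ^ 7 * (e ^ 2 * C ^ 3) := by ring
      rw [this]
      have : (42 * e * 1) ^ 2 * C ^ 3 = 1764 * (e ^ 2 * C ^ 3) := by ring
      rw [this]
      nlinarith
    · rw [hZ, h]
      refine le_trans ?_ (le_max_right _ _)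
      have t1 : (42 * e * (2 * m / (C * s))) ^ 2 * C ^ 3 = 7056 * (e ^ 2 * C * (m:ℝ) ^ 2 / s ^ 2) := by
        field_simp; ring
      have t2 : (32 * e ^ 2 * C) ^ 2 * (m : ℝ) ^ 2 / s ^ 2 = (1024 * (e ^ 2 * C)) * (e ^ 2 * C * (m:ℝ) ^ 2 / s ^ 2) := by
        ring
      rw [t1, t2]
      gcongr
      nlinarith
  calc (42 * e * Y) ^ K * C ^ (K + q) * (1 / s) ^ m
      ≤ (42 * e * Z) ^ (2 * m) * C ^ (3 * m) * (1 / s) ^ m := by gcongr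
    _ = (((42 * e * Z) ^ 2 * C ^ 3) / s) ^ m := by
        rw [pow_mul, pow_mul, ← mul_pow, ← mul_pow, mul_one_div]
    _ ≤ _ := by gcongr

lemma full_one (n : ℕ) : fullCycleType (1 : Perm (Fin n)) = Multiset.replicate n 1 := by
  simp [fullCycleType]

lemma norm_eq {n : ℕ} (lam : Fin n → ℕ) (ha : Antitone lam) (hs : ∑ i, lam i = n) :
    ∃ T : Tab lam, ∀ π, |normChar n lam π| ≤ |(psi T.r T.c π : ℝ)| / n.factorial := by
  obtain ⟨T, c, h⟩ := frob_prop lam ha hs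
  refine ⟨T, fun π => ?_⟩
  have h1 := h 1
  rw [full_one, psi_one] at h1
  unfold normChar
  rw [h1, h π]
  by_cases hc : c = 0
  · subst hc; simp; positivity
  · push_cast
    rw [mul_div_mul_left _ _ hc, abs_div, Nat.abs_cast]

end CB

theorem char_bound_explicit (C : ℝ) (hC : 0 < C) (n : ℕ) (lam : Fin n → ℕ)
    (hanti : ∀ i j : Fin n, i ≤ j → lam j ≤ lam i)
    (hsum : ∑ i, lam i = n)
    (hrows : ((Finset.univ.filter fun i : Fin n => lam i ≠ 0).card : ℝ) ≤ C * Real.sqrt n)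
    (hcols : ∀ i : Fin n, (lam i : ℝ) ≤ C * Real.sqrt n)
    (π : Equiv.Perm (Fin n)) :
    |normChar n lam π| ≤
      (max ((16 * Real.exp 1 ^ 3 * C) ^ 3)
          ((32 * Real.exp 1 ^ 2 * C) ^ 2 * (permLength π : ℝ) ^ 2 / n) /
        Real.sqrt n) ^ permLength π := by
  by_cases hπ : π = 1
  · subst hπ
    have h0 : permLength (1 : Equiv.Perm (Fin n)) = 0 := by simp [permLength]
    rw [h0, pow_zero]
    unfold normChar
    rw [CB.full_one, abs_div]
    exact div_self_le_one _
  obtain ⟨x0, hx0⟩ : ∃ x, π x ≠ x := by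
    by_contra h
    push Not at h
    exact hπ (Equiv.ext h)
  have hn : 0 < n := x0.pos
  have hn' : (0:ℝ) < n := by exact_mod_cast hn
  have ha : Antitone lam := fun i j h => hanti i j h
  obtain ⟨T, hT⟩ := CB.norm_eq lam ha hsum
  refine (hT π).trans ?_
  set R := (Finset.univ.filter fun i : Fin n => lam i ≠ 0).card with hRdef
  set L := lam ⟨0, hn⟩ with hLdef
  have hL : ∀ x, (T.c x : ℕ) < L := fun x => (T.mem x).trans_le (ha (Fin.mk_le_of_le_val (Nat.zero_le _)))
  have hR : ∀ x, (T.r x : ℕ) < R := by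
    intro x
    have h1 : Finset.Iic (T.r x) ⊆ Finset.univ.filter fun i : Fin n => lam i ≠ 0 := by
      intro i hi
      have h2 := T.mem x
      have h3 := ha (Finset.mem_Iic.1 hi)
      simp only [Finset.mem_filter, Finset.mem_univ, true_and]
      omega
    have h2 := Finset.card_le_card h1
    rw [Fin.card_Iic] at h2
    omega
  have hs0 : 0 < Real.sqrt n := Real.sqrt_pos.2 hn'
  have hss : Real.sqrt n ^ 2 = n := Real.sq_sqrt hn'.le
  have hC1 : 1 ≤ C := by
    have h1 : n ≤ R * L := by
      calc n = ∑ i, lam i := hsum.symm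
        _ = ∑ i ∈ Finset.univ.filter fun i : Fin n => lam i ≠ 0, lam i := by
            rw [Finset.sum_filter_ne_zero]
        _ ≤ R * L := by
            rw [hRdef, ← smul_eq_mul]
            apply Finset.sum_le_card_nsmul
            intro i _
            exact ha (Fin.mk_le_of_le_val (Nat.zero_le _))
    have h2 : (n:ℝ) ≤ R * L := by exact_mod_cast h1
    have h3 : (R:ℝ) * L ≤ (C * Real.sqrt n) * (C * Real.sqrt n) := by
      gcongr
      exact hcols _
    have h4 : (n:ℝ) * 1 ≤ n * C ^ 2 := by
      calc (n:ℝ) * 1 ≤ (C * Real.sqrt n) * (C * Real.sqrt n) := by linarith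
        _ = (Real.sqrt n ^ 2) * C ^ 2 := by ring
        _ = _ := by rw [hss]
    have h5 := le_of_mul_le_mul_left h4 hn'
    nlinarith
  have hN : 1 ≤ C * Real.sqrt n := by
    have : 1 ≤ Real.sqrt n := by
      rw [Real.one_le_sqrt]
      exact_mod_cast hn
    nlinarith
  have : Nonempty {x // π x ≠ x} := ⟨⟨x0, hx0⟩⟩
  have hTb := CB.T_bound (CB.piS π) (fun x hx => x.2 (congrArg Subtype.val hx)) (C * Real.sqrt n) hN R L hrows (hcols _)
  rw [CB.piS_cyc, CB.piS_card] at hTb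
  have hpsi := CB.psi_bound (π := π) T.inj hR hL
  have hpsi' := (Int.cast_le (R := ℝ)).2 hpsi
  push_cast at hpsi'
  set K := π.cycleType.sum with hK
  have hKn : K ≤ n := by
    have := π.sum_cycleType_le
    simpa using this
  have hq2 : 2 * π.cycleType.card ≤ K := by
    have := Multiset.card_nsmul_le_sum (s := π.cycleType) (a := 2) (fun x hx => Equiv.Perm.two_le_of_mem_cycleType hx)
    rw [smul_eq_mul] at this
    omega
  have hpl : permLength π = K - π.cycleType.card := rfl
  have hnum := CB.num_bound C hC1 n K π.cycleType.card (permLength π) hn (by omega) (by omega)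
  refine le_trans ?_ hnum
  have hfac : ((n - K).factorial : ℝ) / n.factorial ≤ (Real.exp 1 / n) ^ K := by
    rw [div_pow, div_le_div_iff₀ (by positivity) (by positivity), mul_comm]
    exact CB.fac_ratio K n hKn
  refine (div_le_div_of_nonneg_right
    (hpsi'.trans (mul_le_mul_of_nonneg_left hTb (by positivity))) (by positivity)).trans ?_
  rw [mul_div_right_comm]
  exact mul_le_mul_of_nonneg_right hfac (by positivity)
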